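/- arXiv:2605.02349 — 13 statements merged into one kernel-verified Lean document; each statement's English description precedes it below -/
import Mathlib

section
/- Let A be a positive trace-class operator and B a positive bounded operator on a complex Hilbert space H. Then the operator (A^2 + B^2)^{1/2} − B is positive and trace class, and Tr[(A^2 + B^2)^{1/2} − B] ≤ Tr[A]. -/
set_option synthInstance.maxHeartbeats 1000000
set_option maxHeartbeats 1000000

open scoped InnerProductSpace

section TraceSetup

variable (H : Type*) [NormedAddCommGroup H] [InnerProductSpace ℂ H] [CompleteSpace H]

/-- A fixed Hilbert basis of `H`, used to define the trace. -/
noncomputable def traceBasis : HilbertBasis (exists_hilbertBasis ℂ H).choose ℂ H :=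
  (exists_hilbertBasis ℂ H).choose_spec.choose

variable {H}

/-- The diagonal of an operator with respect to the chosen Hilbert basis. -/
noncomputable def opDiag (A : H →L[ℂ] H) (i : (exists_hilbertBasis ℂ H).choose) : ℝ :=
  (⟪traceBasis H i, A (traceBasis H i)⟫_ℂ).re

/-- The trace of an operator: the sum of its diagonal with respect to the chosen Hilbert
basis.  For a trace-class operator this agrees with the usual trace. -/
noncomputable def opTrace (A : H →L[ℂ] H) : ℝ := ∑' i, opDiag A i

/-- An operator is a positive trace-class operator iff it is positive (for the Loewner order,
i.e. self-adjoint with nonnegative quadratic form) and its diagonal is summable. -/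
def IsPosTraceClass (A : H →L[ℂ] H) : Prop := 0 ≤ A ∧ Summable (opDiag A)

/-- `A` is Hilbert–Schmidt iff `A* A` has finite trace. -/
def IsHilbertSchmidt (A : H →L[ℂ] H) : Prop := Summable (opDiag (star A * A))

/-- The Hilbert–Schmidt norm `‖A‖_HS = (Tr[A* A])^{1/2}`. -/
noncomputable def hsNorm (A : H →L[ℂ] H) : ℝ := Real.sqrt (opTrace (star A * A))

end TraceSetup
open Filter Topology

section Helpers

variable {H : Type*} [NormedAddCommGroup H] [InnerProductSpace ℂ H] [CompleteSpace H]

lemma aux_quad_mono {S T : H →L[ℂ] H} (h : S ≤ T) (x : H) :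
    (⟪x, S x⟫_ℂ).re ≤ (⟪x, T x⟫_ℂ).re := by
  have := ((ContinuousLinearMap.le_def S T).1 h).re_inner_nonneg_right x
  simp only [ContinuousLinearMap.sub_apply, inner_sub_right, map_sub] at this
  simpa using this

lemma aux_sa_inner {S : H →L[ℂ] H} (h : IsSelfAdjoint S) (x y : H) :
    ⟪S x, y⟫_ℂ = ⟪x, S y⟫_ℂ := h.isSymmetric x y

lemma aux_parseval {ι : Type*} (b : HilbertBasis ι ℂ H) (x : H) :
    ∑' i, ENNReal.ofReal (‖⟪b i, x⟫_ℂ‖ ^ 2) = ENNReal.ofReal (‖x‖ ^ 2) := by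
  have h := b.hasSum_inner_mul_inner x x
  have h2 : HasSum (fun i => ‖⟪b i, x⟫_ℂ‖ ^ 2) (‖x‖ ^ 2) := by
    have h3 := Complex.reCLM.hasSum h
    convert h3 using 1
    · funext i
      simp only [Complex.reCLM_apply]
      rw [← inner_conj_symm, Complex.mul_conj, Complex.ofReal_re,
        Complex.normSq_eq_norm_sq, Complex.norm_conj]
    · simp only [Complex.reCLM_apply]
      exact (inner_self_eq_norm_sq (𝕜 := ℂ) x).symm
  rw [← h2.tsum_eq, ENNReal.ofReal_tsum_of_nonneg (fun _ => by positivity) h2.summable]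

lemma aux_hs_symm {ι : Type*} (b : HilbertBasis ι ℂ H) (T : H →L[ℂ] H) :
    ∑' i, ENNReal.ofReal (‖T (b i)‖ ^ 2) = ∑' i, ENNReal.ofReal (‖(star T) (b i)‖ ^ 2) := by
  simp_rw [← aux_parseval b (T _), ← aux_parseval b ((star T) _)]
  rw [ENNReal.tsum_comm]
  refine tsum_congr fun i => tsum_congr fun j => ?_
  rw [ContinuousLinearMap.star_eq_adjoint, ContinuousLinearMap.adjoint_inner_right,
    ← norm_inner_symm]

/-- key pointwise bound -/
lemma aux_bound {A K S R : H →L[ℂ] H} (hA : 0 ≤ A) (hAK : A ≤ K) (hS : S * S = K)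
    (hR : IsSelfAdjoint R) (hRS : R * S = 1) (hSR : S * R = 1) (x : H) :
    ‖R (A x)‖ ^ 2 ≤ (⟪x, A x⟫_ℂ).re := by
  set Q := CFC.sqrt A with hQdef
  have hQ0 : 0 ≤ Q := CFC.sqrt_nonneg A
  have hQs : IsSelfAdjoint Q := IsSelfAdjoint.of_nonneg hQ0
  have hQQ : Q * Q = A := CFC.sqrt_mul_sqrt_self A hA
  have h1 : R * A * R ≤ 1 := by
    have := hR.conjugate_le_conjugate hAK
    rwa [← hS, ← mul_assoc R, hRS, one_mul, hSR] at this
  have h2 : ‖Q * R‖ ≤ 1 := by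
    have h3 : star (Q * R) * (Q * R) ≤ 1 := by
      rw [star_mul, hQs.star_eq, hR.star_eq]
      calc R * Q * (Q * R) = R * (Q * Q) * R := by simp only [mul_assoc]
        _ ≤ 1 := by rw [hQQ]; exact h1
    have h4 := (CStarAlgebra.norm_le_one_iff_of_nonneg _ (star_mul_self_nonneg (Q * R))).2 h3
    rw [CStarRing.norm_star_mul_self] at h4
    nlinarith [norm_nonneg (Q * R)]
  have h5 : ‖R * Q‖ ≤ 1 := by
    rw [← norm_star, star_mul, hQs.star_eq, hR.star_eq]; exact h2
  have h6 : R (A x) = (R * Q) (Q x) := by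
    rw [← hQQ]; rfl
  have h7 : (⟪x, A x⟫_ℂ).re = ‖Q x‖ ^ 2 := by
    rw [← hQQ, ContinuousLinearMap.mul_apply, ← aux_sa_inner hQs]
    exact inner_self_eq_norm_sq (𝕜 := ℂ) (Q x)
  rw [h6, h7]
  gcongr
  calc _ ≤ ‖R * Q‖ * ‖Q x‖ := ContinuousLinearMap.le_opNorm _ _
    _ ≤ 1 * ‖Q x‖ := by gcongr
    _ = _ := one_mul _

lemma aux_sum_bound {ι : Type*} (b : HilbertBasis ι ℂ H) {A K S R : H →L[ℂ] H}
    (hA : 0 ≤ A) (hAK : A ≤ K) (hS : S * S = K)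
    (hR : IsSelfAdjoint R) (hRS : R * S = 1) (hSR : S * R = 1) (F : Finset ι)
    (hF : ∀ i ∉ F, A (b i) = 0) (G : Finset ι) :
    ∑ i ∈ G, ‖A (R (b i))‖ ^ 2 ≤ ∑ i ∈ F, (⟪b i, A (b i)⟫_ℂ).re := by
  have hAs : IsSelfAdjoint A := IsSelfAdjoint.of_nonneg hA
  have h0 : ∑ i ∈ F, ‖R (A (b i))‖ ^ 2 ≤ ∑ i ∈ F, (⟪b i, A (b i)⟫_ℂ).re :=
    Finset.sum_le_sum fun i _ => aux_bound hA hAK hS hR hRS hSR (b i)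
  refine le_trans ?_ h0
  have h := aux_hs_symm b (A * R)
  rw [star_mul, hAs.star_eq, hR.star_eq] at h
  rw [tsum_eq_sum (s := F) (f := fun i => ENNReal.ofReal (‖(R * A) (b i)‖ ^ 2))] at h
  · rw [← ENNReal.ofReal_sum_of_nonneg (fun _ _ => by positivity)] at h
    rw [← ENNReal.ofReal_le_ofReal_iff (by positivity),
      ENNReal.ofReal_sum_of_nonneg (fun _ _ => by positivity)]
    calc _ ≤ _ := ENNReal.sum_le_tsum (f := fun i => ENNReal.ofReal (‖(A * R) (b i)‖ ^ 2)) G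
      _ = _ := h
  · intro i hi
    simp [hF i hi]

lemma aux_sqrt_ge {A B : H →L[ℂ] H} (hA : 0 ≤ A) (hB : 0 ≤ B) :
    B ≤ CFC.sqrt (A ^ 2 + B ^ 2) := by
  have h : B ^ 2 ≤ A ^ 2 + B ^ 2 :=
    le_add_of_nonneg_left (by rw [sq]; exact (IsSelfAdjoint.of_nonneg hA).mul_self_nonneg)
  calc B = CFC.sqrt (B ^ 2) := (CFC.sqrt_sq B hB).symm
    _ ≤ _ := CFC.sqrt_le_sqrt _ _ h

lemma aux_trace_sub {ι : Type*} (b : HilbertBasis ι ℂ H) {A B : H →L[ℂ] H}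
    (hA : 0 ≤ A) (hB : 0 ≤ B) (F : Finset ι)
    (hAF : ∀ i ∉ F, A (b i) = 0) (hBF : ∀ i ∉ F, B (b i) = 0) (G : Finset ι) :
    ∑ i ∈ G, (⟪b i, CFC.sqrt (A ^ 2 + B ^ 2) (b i)⟫_ℂ).re ≤
      ∑ i ∈ F, (⟪b i, A (b i)⟫_ℂ).re + ∑ i ∈ F, (⟪b i, B (b i)⟫_ℂ).re := by
  have hAs : IsSelfAdjoint A := IsSelfAdjoint.of_nonneg hA
  have hBs : IsSelfAdjoint B := IsSelfAdjoint.of_nonneg hB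
  have hBC := aux_sqrt_ge hA hB
  have hAC := aux_sqrt_ge hB hA
  rw [add_comm] at hAC
  have hX : 0 ≤ A ^ 2 + B ^ 2 := by
    rw [sq, sq]; exact add_nonneg hAs.mul_self_nonneg hBs.mul_self_nonneg
  have hCC : CFC.sqrt (A ^ 2 + B ^ 2) * CFC.sqrt (A ^ 2 + B ^ 2) = A ^ 2 + B ^ 2 :=
    CFC.sqrt_mul_sqrt_self _ hX
  have hC0 : 0 ≤ CFC.sqrt (A ^ 2 + B ^ 2) := CFC.sqrt_nonneg _
  set C := CFC.sqrt (A ^ 2 + B ^ 2) with hC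
  suffices h : ∀ δ : ℝ, 0 < δ → ∑ i ∈ G, (⟪b i, C (b i)⟫_ℂ).re ≤
      (∑ i ∈ F, (⟪b i, A (b i)⟫_ℂ).re + ∑ i ∈ F, (⟪b i, B (b i)⟫_ℂ).re) + δ * G.card by
    refine le_of_forall_pos_le_add fun ε hε => ?_
    have := h (ε / (G.card + 1)) (by positivity)
    refine this.trans ?_
    gcongr
    rw [div_mul_eq_mul_div, div_le_iff₀ (by positivity)]
    nlinarith
  intro δ hδ
  have hδ1 : (0 : H →L[ℂ] H) ≤ algebraMap ℝ (H →L[ℂ] H) δ := algebraMap_nonneg _ hδ.le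
  set K := C + algebraMap ℝ (H →L[ℂ] H) δ with hK
  have hCK : C ≤ K := le_add_of_nonneg_right hδ1
  have hK0 : 0 ≤ K := hC0.trans hCK
  have hKu : IsUnit K := by
    refine CStarAlgebra.isUnit_of_le (algebraMap ℝ (H →L[ℂ] H) δ)
      (le_add_of_nonneg_left hC0) ?_
    refine ⟨hδ1, ?_⟩
    exact (IsUnit.mk0 δ hδ.ne').map (algebraMap ℝ (H →L[ℂ] H))
  have hSu : IsUnit (CFC.sqrt K) := (CFC.isUnit_sqrt_iff K hK0).2 hKu
  have hSS : CFC.sqrt K * CFC.sqrt K = K := CFC.sqrt_mul_sqrt_self _ hK0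
  have hSs : IsSelfAdjoint (CFC.sqrt K) := IsSelfAdjoint.of_nonneg (CFC.sqrt_nonneg _)
  set S := CFC.sqrt K
  obtain ⟨u, hu⟩ := hSu
  obtain ⟨R, hRS, hSR⟩ : ∃ R, R * S = 1 ∧ S * R = 1 := ⟨↑u⁻¹, by simp [← hu], by simp [← hu]⟩
  have hR : IsSelfAdjoint R := by
    have h1 : S * star R = 1 := by
      have := congrArg star hRS
      rwa [star_mul, hSs.star_eq, star_one] at this
    calc star R = (R * S) * star R := by rw [hRS, one_mul]
      _ = R := by rw [mul_assoc, h1, mul_one]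
  have hA' := aux_sum_bound b hA (hAC.trans hCK) hSS hR hRS hSR F hAF G
  have hB' := aux_sum_bound b hB (hBC.trans hCK) hSS hR hRS hSR F hBF G
  have hop : R * (A ^ 2 + B ^ 2) * R = C - algebraMap ℝ (H →L[ℂ] H) δ
      + (δ ^ 2) • (R * R) := by
    have e1 : C = K - algebraMap ℝ (H →L[ℂ] H) δ := by rw [hK]; abel
    have e2 : R * K * R = 1 := by
      rw [← hSS, ← mul_assoc, hRS, one_mul, hSR]
    have e3 : R * (K * K) * R = K := by
      calc R * (K * K) * R = (R * S) * (S * S) * (S * R) := by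
            rw [← hSS]; simp only [mul_assoc]
        _ = K := by rw [hRS, hSR, one_mul, mul_one, hSS]
    rw [← hCC, e1, Algebra.algebraMap_eq_smul_one]
    have : R * ((K - δ • (1 : H →L[ℂ] H)) * (K - δ • (1 : H →L[ℂ] H))) * R
        = R * (K * K) * R - (2 * δ) • (R * K * R) + (δ ^ 2) • (R * R) := by
      simp only [mul_sub, sub_mul, mul_smul_comm, smul_mul_assoc, mul_one, one_mul]
      module
    rw [this, e2, e3]
    module
  have hpt : ∀ x : H, ‖x‖ = 1 → (⟪x, C x⟫_ℂ).re ≤ ‖A (R x)‖ ^ 2 + ‖B (R x)‖ ^ 2 + δ := by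
    intro x hx
    have e := congrArg (fun T : H →L[ℂ] H => (⟪x, T x⟫_ℂ).re) hop
    have hxx : ⟪x, x⟫_ℂ = 1 := by rw [inner_self_eq_norm_sq_to_K, hx]; simp
    have l : (⟪x, (R * (A ^ 2 + B ^ 2) * R) x⟫_ℂ).re = ‖A (R x)‖ ^ 2 + ‖B (R x)‖ ^ 2 := by
      simp only [ContinuousLinearMap.mul_apply, ContinuousLinearMap.add_apply, sq (A), sq (B)]
      rw [← aux_sa_inner hR, inner_add_right, ← aux_sa_inner hAs, ← aux_sa_inner hBs,
        Complex.add_re]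
      congr 1
      · exact inner_self_eq_norm_sq (𝕜 := ℂ) _
      · exact inner_self_eq_norm_sq (𝕜 := ℂ) _
    have r : (⟪x, (C - algebraMap ℝ (H →L[ℂ] H) δ + (δ ^ 2) • (R * R)) x⟫_ℂ).re
        = (⟪x, C x⟫_ℂ).re - δ + δ ^ 2 * ‖R x‖ ^ 2 := by
      rw [Algebra.algebraMap_eq_smul_one]
      simp only [ContinuousLinearMap.mul_apply, ContinuousLinearMap.add_apply,
        ContinuousLinearMap.sub_apply, ContinuousLinearMap.smul_apply,
        ContinuousLinearMap.one_apply, inner_add_right, inner_sub_right, Complex.add_re,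
        Complex.sub_re]
      rw [← Complex.coe_smul, ← Complex.coe_smul, inner_smul_right, inner_smul_right, hxx,
        ← aux_sa_inner hR]
      have : (⟪R x, R x⟫_ℂ) = ((‖R x‖ ^ 2 : ℝ) : ℂ) := by
        rw [inner_self_eq_norm_sq_to_K]; push_cast; rfl
      rw [this, ← Complex.ofReal_mul, Complex.ofReal_re]
      simp
    simp only [l, r] at e
    nlinarith [mul_nonneg (sq_nonneg δ) (sq_nonneg ‖R x‖)]
  calc _ ≤ ∑ i ∈ G, (‖A (R (b i))‖ ^ 2 + ‖B (R (b i))‖ ^ 2 + δ) :=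
        Finset.sum_le_sum fun i _ => hpt _ (b.orthonormal.1 i)
    _ ≤ _ := by
      rw [Finset.sum_add_distrib, Finset.sum_add_distrib, Finset.sum_const, nsmul_eq_mul,
        mul_comm δ]
      gcongr


lemma aux_mul_tendsto {κ : Type*} {l : Filter κ} {S T : κ → H →L[ℂ] H} {S' T' : H →L[ℂ] H}
    {M : ℝ} (hM : ∀ k, ‖S k‖ ≤ M) (hS : ∀ x, Tendsto (fun k => S k x) l (𝓝 (S' x)))
    (hT : ∀ x, Tendsto (fun k => T k x) l (𝓝 (T' x))) (x : H) :
    Tendsto (fun k => (S k * T k) x) l (𝓝 ((S' * T') x)) := by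
  have h1 : Tendsto (fun k => S k (T k x - T' x)) l (𝓝 0) := by
    have h2 : Tendsto (fun k => M * ‖T k x - T' x‖) l (𝓝 0) := by
      have := (tendsto_iff_norm_sub_tendsto_zero.1 (hT x)).const_mul M
      simpa using this
    refine squeeze_zero_norm (fun k => ?_) h2
    exact (ContinuousLinearMap.le_opNorm _ _).trans (by gcongr; exact hM k)
  have h3 := h1.add (hS (T' x))
  rw [zero_add] at h3
  refine h3.congr fun k => ?_
  rw [map_sub, sub_add_cancel]
  rfl

lemma aux_pow_tendsto {κ : Type*} {l : Filter κ} {T : κ → H →L[ℂ] H} {T' : H →L[ℂ] H}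
    {M : ℝ} (hM : ∀ k, ‖T k‖ ≤ M)
    (hT : ∀ x, Tendsto (fun k => T k x) l (𝓝 (T' x))) (n : ℕ) : ∀ (x : H),
    Tendsto (fun k => (T k ^ n) x) l (𝓝 ((T' ^ n) x)) := by
  induction n with
  | zero => intro x; simp only [pow_zero]; exact tendsto_const_nhds
  | succ n ih =>
    intro x
    simp only [pow_succ']
    exact aux_mul_tendsto hM hT ih x

lemma aux_poly_tendsto {κ : Type*} {l : Filter κ} {T : κ → H →L[ℂ] H} {T' : H →L[ℂ] H}
    {M : ℝ} (hM : ∀ k, ‖T k‖ ≤ M)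
    (hT : ∀ x, Tendsto (fun k => T k x) l (𝓝 (T' x))) (p : Polynomial ℝ) : ∀ (x : H),
    Tendsto (fun k => (Polynomial.aeval (T k) p) x) l (𝓝 ((Polynomial.aeval T' p) x)) := by
  induction p using Polynomial.induction_on' with
  | add p q hp hq =>
    intro x
    simp only [map_add]
    exact (hp x).add (hq x)
  | monomial n a =>
    intro x
    simp only [Polynomial.aeval_monomial, Algebra.algebraMap_eq_smul_one, smul_mul_assoc, one_mul]
    exact (aux_pow_tendsto hM hT n x).const_smul a

lemma aux_sqrt_near {M ε : ℝ} (hε : 0 < ε) {p : Polynomial ℝ}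
    (hp : ∀ x ∈ Set.Icc 0 M, |p.eval x - √x| < ε) {T : H →L[ℂ] H} (hT : 0 ≤ T) (hTM : ‖T‖ ≤ M) :
    ‖Polynomial.aeval T p - CFC.sqrt T‖ ≤ ε := by
  have hTs : IsSelfAdjoint T := IsSelfAdjoint.of_nonneg hT
  rw [CFC.sqrt_eq_real_sqrt T hT, cfcₙ_eq_cfc (by fun_prop) (by simp), ← cfc_polynomial p T hTs,
    ← cfc_sub _ _ _ (by fun_prop) (by fun_prop)]
  refine norm_cfc_le hε.le fun x hx => ?_
  have h0 : 0 ≤ x := spectrum_nonneg_of_nonneg hT hx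
  have h1 : x ≤ M := by
    rcases subsingleton_or_nontrivial (H →L[ℂ] H) with hn | hn
    · rw [spectrum.of_subsingleton] at hx
      exact absurd hx (Set.notMem_empty x)
    have := spectrum.norm_le_norm_of_mem hx
    exact (le_abs_self x).trans (this.trans hTM)
  exact (hp x ⟨h0, h1⟩).le

lemma aux_sqrt_tendsto {κ : Type*} {l : Filter κ} {T : κ → H →L[ℂ] H} {T' : H →L[ℂ] H}
    {M : ℝ} (hM : ∀ k, ‖T k‖ ≤ M) (hM' : ‖T'‖ ≤ M) (h0 : ∀ k, 0 ≤ T k) (h0' : 0 ≤ T')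
    (hT : ∀ x, Tendsto (fun k => T k x) l (𝓝 (T' x))) (x : H) :
    Tendsto (fun k => CFC.sqrt (T k) x) l (𝓝 (CFC.sqrt T' x)) := by
  rw [Metric.tendsto_nhds]
  intro ε hε
  set η := ε / (3 * (‖x‖ + 1)) with hη
  have hη0 : 0 < η := by positivity
  have hηx : η * ‖x‖ < ε / 3 := by
    rw [hη, div_mul_eq_mul_div, div_lt_div_iff₀ (by positivity) (by positivity)]
    nlinarith [norm_nonneg x]
  obtain ⟨p, hp⟩ := exists_polynomial_near_of_continuousOn 0 M Real.sqrt
    Real.continuous_sqrt.continuousOn η hη0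
  have h1 := (Metric.tendsto_nhds.1 (aux_poly_tendsto hM hT p x)) (ε / 3) (by positivity)
  have key : ∀ U : H →L[ℂ] H, 0 ≤ U → ‖U‖ ≤ M →
      ‖Polynomial.aeval U p x - CFC.sqrt U x‖ < ε / 3 := by
    intro U hU hUM
    have := aux_sqrt_near hη0 hp hU hUM
    refine lt_of_le_of_lt ?_ hηx
    exact (ContinuousLinearMap.le_opNorm (Polynomial.aeval U p - CFC.sqrt U) x).trans (by gcongr)
  filter_upwards [h1] with k hk
  have a1 := key _ (h0 k) (hM k)
  have a2 := key _ h0' hM'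
  rw [← dist_eq_norm] at a1 a2
  rw [dist_comm] at a1
  have t1 := dist_triangle (CFC.sqrt (T k) x) (Polynomial.aeval (T k) p x) (CFC.sqrt T' x)
  have t2 := dist_triangle (Polynomial.aeval (T k) p x) (Polynomial.aeval T' p x) (CFC.sqrt T' x)
  linarith

lemma aux_main {ι : Type*} (b : HilbertBasis ι ℂ H) {A B : H →L[ℂ] H}
    (hA : 0 ≤ A) (hB : 0 ≤ B) (hs : Summable fun i => (⟪b i, A (b i)⟫_ℂ).re) (G : Finset ι) :
    ∑ i ∈ G, (⟪b i, (CFC.sqrt (A ^ 2 + B ^ 2) - B) (b i)⟫_ℂ).re ≤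
      ∑' i, (⟪b i, A (b i)⟫_ℂ).re := by
  classical
  have hAs : IsSelfAdjoint A := IsSelfAdjoint.of_nonneg hA
  have hBs : IsSelfAdjoint B := IsSelfAdjoint.of_nonneg hB
  let U : Finset ι → Submodule ℂ H := fun F => Submodule.span ℂ (F.image b : Set H)
  have hUm : Monotone U := fun F F' h => Submodule.span_mono (by
    exact_mod_cast Finset.image_subset_image h)
  have hP : ∀ x, Tendsto (fun F => (U F).starProjection x) atTop (𝓝 x) := fun x =>
    Submodule.starProjection_tendsto_self U hUm x b.finite_spans_dense.ge
  let P : Finset ι → H →L[ℂ] H := fun F => (U F).starProjection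
  have hPs : ∀ F, IsSelfAdjoint (P F) := fun F => isSelfAdjoint_starProjection (U F)
  have hPn : ∀ F, ‖P F‖ ≤ 1 := fun F => (U F).starProjection_norm_le
  have hPin : ∀ F, ∀ i ∈ F, P F (b i) = b i := fun F i hi =>
    Submodule.starProjection_eq_self_iff.2 (Submodule.subset_span (by
      simpa using ⟨i, hi, rfl⟩))
  have hPout : ∀ F, ∀ i ∉ F, P F (b i) = 0 := fun F i hi => by
    refine (Submodule.starProjection_apply_eq_zero_iff _).2 ?_
    rw [Submodule.mem_orthogonal]
    intro u hu
    induction hu using Submodule.span_induction with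
    | mem u hu =>
      simp only [Finset.coe_image, Set.mem_image, Finset.mem_coe] at hu
      obtain ⟨j, hj, rfl⟩ := hu
      exact b.orthonormal.2 (fun h => hi (h ▸ hj))
    | zero => simp
    | add u v _ _ hu hv => rw [inner_add_left, hu, hv, add_zero]
    | smul c u _ hu => rw [inner_smul_left, hu, mul_zero]
  -- truncation
  have tr_pos : ∀ X : H →L[ℂ] H, 0 ≤ X → ∀ F, 0 ≤ P F * X * P F := fun X hX F =>
    (hPs F).conjugate_nonneg hX
  have tr_out : ∀ X : H →L[ℂ] H, ∀ F, ∀ i ∉ F, (P F * X * P F) (b i) = 0 := fun X F i hi => by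
    change P F (X (P F (b i))) = 0
    rw [hPout F i hi, map_zero, map_zero]
  have tr_in : ∀ X : H →L[ℂ] H, ∀ F, ∀ i ∈ F,
      ⟪b i, (P F * X * P F) (b i)⟫_ℂ = ⟪b i, X (b i)⟫_ℂ := fun X F i hi => by
    change ⟪b i, P F (X (P F (b i)))⟫_ℂ = _
    rw [hPin F i hi, ← aux_sa_inner (hPs F), hPin F i hi]
  have tr_norm : ∀ X : H →L[ℂ] H, ∀ F, ‖P F * X * P F‖ ≤ ‖X‖ := fun X F => by
    calc ‖P F * X * P F‖ ≤ ‖P F * X‖ * ‖P F‖ := norm_mul_le _ _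
      _ ≤ ‖P F‖ * ‖X‖ * ‖P F‖ := by gcongr; exact norm_mul_le _ _
      _ ≤ 1 * ‖X‖ * 1 := by gcongr <;> exact hPn F
      _ = ‖X‖ := by ring
  have tr_lim : ∀ X : H →L[ℂ] H, ∀ x, Tendsto (fun F => (P F * X * P F) x) atTop (𝓝 (X x)) := by
    intro X x
    have h1 : ∀ x, Tendsto (fun F => (P F * X) x) atTop (𝓝 (X x)) := fun x => hP (X x)
    have h2 : ∀ x, Tendsto (fun F => P F x) atTop (𝓝 ((1 : H →L[ℂ] H) x)) := fun x => hP x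
    have h3 : ∀ F, ‖P F * X‖ ≤ ‖X‖ := fun F => by
      calc ‖P F * X‖ ≤ ‖P F‖ * ‖X‖ := norm_mul_le _ _
        _ ≤ 1 * ‖X‖ := by gcongr; exact hPn F
        _ = ‖X‖ := one_mul _
    have := aux_mul_tendsto h3 h1 h2 x
    rwa [mul_one] at this
  let AF : Finset ι → H →L[ℂ] H := fun F => P F * A * P F
  let BF : Finset ι → H →L[ℂ] H := fun F => P F * B * P F
  have hlim : ∀ x, Tendsto (fun F => CFC.sqrt (AF F ^ 2 + BF F ^ 2) x) atTop
      (𝓝 (CFC.sqrt (A ^ 2 + B ^ 2) x)) := by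
    have hn : ∀ X Y : H →L[ℂ] H, ‖X‖ ≤ ‖A‖ → ‖Y‖ ≤ ‖B‖ → ‖X ^ 2 + Y ^ 2‖ ≤ ‖A‖ ^ 2 + ‖B‖ ^ 2 := by
      intro X Y hX hY
      calc ‖X ^ 2 + Y ^ 2‖ ≤ ‖X ^ 2‖ + ‖Y ^ 2‖ := norm_add_le _ _
        _ ≤ ‖X‖ ^ 2 + ‖Y‖ ^ 2 := by
          gcongr
          · exact norm_pow_le' X two_pos
          · exact norm_pow_le' Y two_pos
        _ ≤ _ := by gcongr
    have hp : ∀ X Y : H →L[ℂ] H, 0 ≤ X → 0 ≤ Y → 0 ≤ X ^ 2 + Y ^ 2 := fun X Y hX hY => by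
      rw [sq, sq]
      exact add_nonneg (IsSelfAdjoint.of_nonneg hX).mul_self_nonneg
        (IsSelfAdjoint.of_nonneg hY).mul_self_nonneg
    refine aux_sqrt_tendsto (M := ‖A‖ ^ 2 + ‖B‖ ^ 2) (fun F => hn _ _ (tr_norm A F) (tr_norm B F))
      (hn _ _ le_rfl le_rfl) (fun F => hp _ _ (tr_pos A hA F) (tr_pos B hB F)) (hp _ _ hA hB) ?_
    intro x
    exact (aux_pow_tendsto (tr_norm A) (tr_lim A) 2 x).add
      (aux_pow_tendsto (tr_norm B) (tr_lim B) 2 x)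
  have hlim2 : Tendsto (fun F => ∑ i ∈ G, ((⟪b i, CFC.sqrt (AF F ^ 2 + BF F ^ 2) (b i)⟫_ℂ).re
      - (⟪b i, B (b i)⟫_ℂ).re)) atTop
      (𝓝 (∑ i ∈ G, ((⟪b i, CFC.sqrt (A ^ 2 + B ^ 2) (b i)⟫_ℂ).re - (⟪b i, B (b i)⟫_ℂ).re))) := by
    refine tendsto_finsetSum _ fun i _ => Tendsto.sub_const ?_ _
    exact (Complex.continuous_re.tendsto _).comp (tendsto_const_nhds.inner (hlim (b i)))
  have e : ∑ i ∈ G, (⟪b i, (CFC.sqrt (A ^ 2 + B ^ 2) - B) (b i)⟫_ℂ).re =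
      ∑ i ∈ G, ((⟪b i, CFC.sqrt (A ^ 2 + B ^ 2) (b i)⟫_ℂ).re - (⟪b i, B (b i)⟫_ℂ).re) := by
    refine Finset.sum_congr rfl fun i _ => ?_
    rw [← Complex.sub_re, ← inner_sub_right]
    rfl
  rw [e]
  refine le_of_tendsto hlim2 ?_
  filter_upwards [eventually_ge_atTop G] with F hF
  have hA0 : ∀ i, 0 ≤ (⟪b i, A (b i)⟫_ℂ).re := fun i => by
    simpa using aux_quad_mono hA (b i)
  have hmono : ∀ i ∈ F, (⟪b i, B (b i)⟫_ℂ).re ≤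
      (⟪b i, CFC.sqrt (AF F ^ 2 + BF F ^ 2) (b i)⟫_ℂ).re := fun i hi => by
    rw [← tr_in B F i hi]
    exact aux_quad_mono (aux_sqrt_ge (tr_pos A hA F) (tr_pos B hB F)) (b i)
  have hmain := aux_trace_sub b (tr_pos A hA F) (tr_pos B hB F) F (tr_out A F) (tr_out B F) F
  have eA : ∑ i ∈ F, (⟪b i, (P F * A * P F) (b i)⟫_ℂ).re = ∑ i ∈ F, (⟪b i, A (b i)⟫_ℂ).re :=
    Finset.sum_congr rfl fun i hi => by rw [tr_in A F i hi]
  have eB : ∑ i ∈ F, (⟪b i, (P F * B * P F) (b i)⟫_ℂ).re = ∑ i ∈ F, (⟪b i, B (b i)⟫_ℂ).re :=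
    Finset.sum_congr rfl fun i hi => by rw [tr_in B F i hi]
  rw [eA, eB] at hmain
  calc _ ≤ ∑ i ∈ F, ((⟪b i, CFC.sqrt (AF F ^ 2 + BF F ^ 2) (b i)⟫_ℂ).re
      - (⟪b i, B (b i)⟫_ℂ).re) :=
        Finset.sum_le_sum_of_subset_of_nonneg hF fun i hi _ => sub_nonneg.2 (hmono i hi)
    _ ≤ ∑ i ∈ F, (⟪b i, A (b i)⟫_ℂ).re := by
        rw [Finset.sum_sub_distrib]
        exact sub_le_iff_le_add.2 hmain
    _ ≤ _ := hs.sum_le_tsum F fun i _ => hA0 i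

end Helpers


/-- For `A` positive trace class and `B` positive bounded,
`(A² + B²)^{1/2} − B` is positive trace class and `Tr[(A² + B²)^{1/2} − B] ≤ Tr[A]`. -/
theorem trace_sqrt_sub_le {H : Type*} [NormedAddCommGroup H] [InnerProductSpace ℂ H]
    [CompleteSpace H] (A B : H →L[ℂ] H) (hA : IsPosTraceClass A) (hB : 0 ≤ B) :
    IsPosTraceClass (CFC.sqrt (A ^ 2 + B ^ 2) - B) ∧
      opTrace (CFC.sqrt (A ^ 2 + B ^ 2) - B) ≤ opTrace A := by
  obtain ⟨hA0, hAs⟩ := hA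
  have hpos : 0 ≤ CFC.sqrt (A ^ 2 + B ^ 2) - B := sub_nonneg.2 (aux_sqrt_ge hA0 hB)
  have hnn : ∀ i, 0 ≤ opDiag (CFC.sqrt (A ^ 2 + B ^ 2) - B) i := fun i => by
    have h := aux_quad_mono hpos (traceBasis H i)
    rw [zero_apply, inner_zero_right, Complex.zero_re] at h
    exact h
  have hle : ∀ G : Finset _, ∑ i ∈ G, opDiag (CFC.sqrt (A ^ 2 + B ^ 2) - B) i ≤ opTrace A :=
    fun G => aux_main (traceBasis H) hA0 hB hAs G
  have hsum := summable_of_sum_le hnn hle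
  exact ⟨⟨hpos, hsum⟩, hsum.tsum_le_of_sum_le hle⟩
end

section
/- Let A be a positive trace-class operator and let B, C be positive bounded operators on a complex Hilbert space H such that B^2 ≤ C^2. Then Tr[(A^2 + C^2)^{1/2} − C] ≤ Tr[(A^2 + B^2)^{1/2} − B], where both (A^2 + B^2)^{1/2} − B and (A^2 + C^2)^{1/2} − C are positive trace-class operators. -/
set_option synthInstance.maxHeartbeats 1000000
set_option maxHeartbeats 1000000

open scoped InnerProductSpace

open scoped ENNReal

section Helpers

variable {H : Type*} [NormedAddCommGroup H] [InnerProductSpace ℂ H] [CompleteSpace H]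

lemma opDiag_add (S T : H →L[ℂ] H) (i) : opDiag (S + T) i = opDiag S i + opDiag T i := by
  simp [opDiag, inner_add_right]

lemma opDiag_sub (S T : H →L[ℂ] H) (i) : opDiag (S - T) i = opDiag S i - opDiag T i := by
  simp [opDiag, inner_sub_right]

lemma opDiag_smul (r : ℝ) (T : H →L[ℂ] H) (i) : opDiag (r • T) i = r * opDiag T i := by
  simp [opDiag, inner_smul_right_eq_smul]

lemma opDiag_one (i) : opDiag (1 : H →L[ℂ] H) i = 1 := by
  simp [opDiag, (traceBasis H).orthonormal.1 i]

lemma opDiag_nonneg {T : H →L[ℂ] H} (hT : 0 ≤ T) (i) : 0 ≤ opDiag T i :=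
  ((ContinuousLinearMap.nonneg_iff_isPositive T).1 hT).re_inner_nonneg_right _

lemma opDiag_mono {S T : H →L[ℂ] H} (h : S ≤ T) (i) : opDiag S i ≤ opDiag T i := by
  have := opDiag_nonneg (sub_nonneg.2 h) i
  rw [opDiag_sub] at this
  linarith

/-- extended trace -/
noncomputable def tau (T : H →L[ℂ] H) : ℝ≥0∞ := ∑' i, ENNReal.ofReal (opDiag T i)

lemma tau_mono {S T : H →L[ℂ] H} (h : S ≤ T) : tau S ≤ tau T :=
  ENNReal.tsum_le_tsum fun i => ENNReal.ofReal_le_ofReal (opDiag_mono h i)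

lemma tau_add {S T : H →L[ℂ] H} (hS : 0 ≤ S) (hT : 0 ≤ T) : tau (S + T) = tau S + tau T := by
  unfold tau
  rw [← ENNReal.tsum_add]
  congr 1; ext i
  rw [opDiag_add, ENNReal.ofReal_add (opDiag_nonneg hS i) (opDiag_nonneg hT i)]

lemma tau_smul {r : ℝ} (hr : 0 ≤ r) (T : H →L[ℂ] H) : tau (r • T) = ENNReal.ofReal r * tau T := by
  unfold tau
  rw [← ENNReal.tsum_mul_left]
  congr 1; ext i
  rw [opDiag_smul, ENNReal.ofReal_mul hr]

lemma tau_star_mul_aux (M : H →L[ℂ] H) (i) : ENNReal.ofReal (opDiag (star M * M) i) =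
    ∑' j, ENNReal.ofReal (‖⟪traceBasis H j, M (traceBasis H i)⟫_ℂ‖ ^ 2) := by
  have h := (traceBasis H).hasSum_inner_mul_inner (M (traceBasis H i)) (M (traceBasis H i))
  have h2 : HasSum (fun j => ‖⟪traceBasis H j, M (traceBasis H i)⟫_ℂ‖ ^ 2)
      (opDiag (star M * M) i) := by
    have h3 := Complex.hasSum_re h
    convert h3 using 1
    · ext j
      rw [← inner_conj_symm (M (traceBasis H i)) (traceBasis H j), mul_comm, Complex.mul_conj]
      simp [Complex.normSq_eq_norm_sq, ← Complex.ofReal_pow]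
    · simp [opDiag, ContinuousLinearMap.star_eq_adjoint, ContinuousLinearMap.adjoint_inner_right]
  rw [← h2.tsum_eq, ENNReal.ofReal_tsum_of_nonneg (fun _ => by positivity) h2.summable]

lemma tau_star_mul (M : H →L[ℂ] H) : tau (star M * M) = tau (M * star M) := by
  have h2 := tau_star_mul_aux (star M)
  rw [star_star] at h2
  unfold tau
  simp_rw [h2, tau_star_mul_aux M]
  rw [ENNReal.tsum_comm]
  congr 1; ext i; congr 1; ext j
  rw [ContinuousLinearMap.star_eq_adjoint, ContinuousLinearMap.adjoint_inner_right,
    norm_inner_symm]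

lemma tau_conj {x T : H →L[ℂ] H} (hx : IsSelfAdjoint x) (hT : 0 ≤ T) :
    tau (x * T * x) = tau (CFC.sqrt T * (x * x) * CFC.sqrt T) := by
  have hs : IsSelfAdjoint (CFC.sqrt T) := IsSelfAdjoint.of_nonneg (CFC.sqrt_nonneg T)
  have h := tau_star_mul (CFC.sqrt T * x)
  rw [star_mul, hx.star_eq, hs.star_eq] at h
  have h2 : x * CFC.sqrt T * (CFC.sqrt T * x) = x * T * x := by
    rw [mul_assoc, ← mul_assoc (CFC.sqrt T), CFC.sqrt_mul_sqrt_self T hT, mul_assoc]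
  rw [h2] at h
  rw [h]; simp only [mul_assoc]

lemma tau_conj_le {T Y : H →L[ℂ] H} (hT : 0 ≤ T) {r : ℝ} (hr : 0 ≤ r) (hY : Y ≤ r • 1) :
    tau (CFC.sqrt T * Y * CFC.sqrt T) ≤ ENNReal.ofReal r * tau T := by
  rw [← tau_smul hr]
  apply tau_mono
  have h := conjugate_le_conjugate_of_nonneg hY (CFC.sqrt_nonneg T)
  simpa [CFC.sqrt_mul_sqrt_self T hT] using h

lemma le_norm_smul_one {T : H →L[ℂ] H} (hT : 0 ≤ T) : T ≤ ‖T‖ • 1 := by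
  have := (IsSelfAdjoint.of_nonneg hT).le_algebraMap_norm_self
  rwa [Algebra.algebraMap_eq_smul_one] at this

/-- inverse square root data -/
lemma exists_ginv {S : H →L[ℂ] H} (hS : 0 ≤ S) (hu : IsUnit S) :
    ∃ g gi : H →L[ℂ] H, IsSelfAdjoint g ∧ IsSelfAdjoint gi ∧ g * gi = 1 ∧ gi * g = 1 ∧
      g * g = S ∧ gi * gi = Ring.inverse S := by
  have hs : IsSelfAdjoint (CFC.sqrt S) := IsSelfAdjoint.of_nonneg (CFC.sqrt_nonneg S)
  have hgg := CFC.sqrt_mul_sqrt_self S hS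
  have hgu : IsUnit (CFC.sqrt S) := by
    rw [← hgg, ← pow_two, isUnit_pow_iff two_ne_zero] at hu
    exact hu
  obtain ⟨u, hu'⟩ := hgu
  have hsu : star u = u := by ext1; rw [Units.coe_star, hu', hs.star_eq]
  refine ⟨u, (u⁻¹ : (H →L[ℂ] H)ˣ), hu' ▸ hs, ?_, by simp, by simp, by rw [hu', hgg], ?_⟩
  · rw [IsSelfAdjoint, ← Units.coe_star, star_inv, hsu]
  · have : S = ((u * u : (H →L[ℂ] H)ˣ) : H →L[ℂ] H) := by rw [Units.val_mul, hu', hgg]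
    rw [this, Ring.inverse_unit, mul_inv_rev, Units.val_mul]

lemma tau_identity {S d P : H →L[ℂ] H} (hS : 0 ≤ S) (hu : IsUnit S) (hd : 0 ≤ d) (hP : 0 ≤ P)
    (hfin : tau d ≠ ∞) (h : S * d + d * S = (2 : ℝ) • P) :
    tau d = tau (CFC.sqrt P * Ring.inverse S * CFC.sqrt P) := by
  obtain ⟨g, gi, hg, hgi, h1, h2, h3, h4⟩ := exists_ginv hS hu
  have key : (g + gi) * d * (g + gi) = g * d * g + gi * d * gi + (2 : ℝ) • (gi * P * gi) := by
    have : (2 : ℝ) • (gi * P * gi) = g * d * gi + gi * d * g := by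
      rw [← smul_mul_assoc, ← mul_smul_comm, ← h, ← h3]
      calc gi * (g * g * d + d * (g * g)) * gi
          = (gi * g) * g * d * gi + gi * d * g * (g * gi) := by noncomm_ring
        _ = _ := by rw [h1, h2]; simp
    rw [this]; noncomm_ring
  have n1 := hg.conjugate_nonneg hd
  have n2 := hgi.conjugate_nonneg hd
  have n3 := hgi.conjugate_nonneg hP
  have hSi : 0 ≤ Ring.inverse S := by
    rw [← h4]; nth_rw 1 [← hgi.star_eq]; exact star_mul_self_nonneg gi
  have hsd := CFC.sqrt_nonneg d
  have m1 := conjugate_nonneg_of_nonneg hS hsd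
  have m2 := conjugate_nonneg_of_nonneg hSi hsd
  have e := congrArg tau key
  rw [tau_conj (hg.add hgi) hd, tau_add (add_nonneg n1 n2) (smul_nonneg zero_le_two n3),
    tau_add n1 n2, tau_smul zero_le_two, tau_conj hg hd, tau_conj hgi hd, tau_conj hgi hP,
    h3, h4] at e
  have e2 : CFC.sqrt d * ((g + gi) * (g + gi)) * CFC.sqrt d =
      CFC.sqrt d * S * CFC.sqrt d + CFC.sqrt d * Ring.inverse S * CFC.sqrt d + (2 : ℝ) • d := by
    have : (g + gi) * (g + gi) = S + Ring.inverse S + (2 : ℝ) • 1 := by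
      rw [← h4, ← h3, add_mul, mul_add, mul_add, h1, h2, two_smul]; abel
    rw [this, mul_add, mul_add, add_mul, add_mul, mul_smul_comm, smul_mul_assoc, mul_one,
      CFC.sqrt_mul_sqrt_self d hd]
  rw [e2, tau_add (add_nonneg m1 m2) (smul_nonneg zero_le_two hd), tau_add m1 m2,
    tau_smul zero_le_two] at e
  have f1 : tau (CFC.sqrt d * S * CFC.sqrt d) ≠ ∞ :=
    ne_top_of_le_ne_top (ENNReal.mul_ne_top ENNReal.ofReal_ne_top hfin)
      (tau_conj_le hd (norm_nonneg S) (le_norm_smul_one hS))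
  have f2 : tau (CFC.sqrt d * Ring.inverse S * CFC.sqrt d) ≠ ∞ :=
    ne_top_of_le_ne_top (ENNReal.mul_ne_top ENNReal.ofReal_ne_top hfin)
      (tau_conj_le hd (norm_nonneg _) (le_norm_smul_one hSi))
  have e3 := (ENNReal.add_right_inj (ENNReal.add_ne_top.2 ⟨f1, f2⟩)).1 e
  exact (ENNReal.mul_right_inj (by simp) ENNReal.ofReal_ne_top).1 e3

lemma tau_le_of_approx {d : H →L[ℂ] H} {M : ℝ≥0∞}
    (h : ∀ δ : ℝ, 0 < δ → ∃ T : H →L[ℂ] H, 0 ≤ T ∧ tau T ≤ M ∧ d ≤ T + δ • 1) : tau d ≤ M := by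
  unfold tau
  rw [ENNReal.tsum_eq_iSup_sum]
  refine iSup_le fun F => ?_
  refine ENNReal.le_of_forall_pos_le_add fun ε hε _ => ?_
  have hc : (0 : ℝ) < (F.card : ℝ) + 1 := by positivity
  have hε' : (0 : ℝ) < ε := hε
  obtain ⟨T, hT, hTM, hdT⟩ := h (ε / ((F.card : ℝ) + 1)) (by positivity)
  calc ∑ i ∈ F, ENNReal.ofReal (opDiag d i)
      ≤ ∑ i ∈ F, (ENNReal.ofReal (opDiag T i) + ENNReal.ofReal (ε / ((F.card : ℝ) + 1))) := by
        refine Finset.sum_le_sum fun i _ => ?_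
        rw [← ENNReal.ofReal_add (opDiag_nonneg hT i) (by positivity)]
        apply ENNReal.ofReal_le_ofReal
        have := opDiag_mono hdT i
        rwa [opDiag_add, opDiag_smul, opDiag_one, mul_one] at this
    _ ≤ M + ε := by
        rw [Finset.sum_add_distrib]
        gcongr
        · exact (ENNReal.sum_le_tsum F).trans hTM
        · rw [Finset.sum_const, nsmul_eq_mul, ← ENNReal.ofReal_natCast,
            ← ENNReal.ofReal_mul (by positivity), ← ENNReal.ofReal_coe_nnreal]
          apply ENNReal.ofReal_le_ofReal
          rw [mul_div_assoc', div_le_iff₀ hc]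
          nlinarith

lemma tau_finite {S d P : H →L[ℂ] H} {e : ℝ} (he : 0 < e) (hS : e • 1 ≤ S)
    (hd : 0 ≤ d) (hP : 0 ≤ P) (hfin : tau P ≠ ∞) (h : S * d + d * S = (2 : ℝ) • P) :
    tau d ≠ ∞ := by
  have hS0 : 0 ≤ S := (smul_nonneg he.le zero_le_one).trans hS
  set r : ℝ := ‖S‖ + e with hr
  have hr0 : 0 < r := by positivity
  set q : ℝ := 1 - r⁻¹ * e with hq
  have hq1 : q < 1 := by have : 0 < r⁻¹ * e := by positivity
                         linarith
  have hq0 : 0 ≤ q := by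
    have : r⁻¹ * e ≤ 1 := by
      rw [inv_mul_le_iff₀ hr0]; linarith [norm_nonneg S]
    linarith
  set V : H →L[ℂ] H := 1 - r⁻¹ • S with hV
  have hSr : S ≤ r • 1 := (le_norm_smul_one hS0).trans
    (smul_le_smul_of_nonneg_right (by linarith) zero_le_one)
  have hrS : r⁻¹ • S ≤ 1 := by
    have := smul_le_smul_of_nonneg_left hSr (inv_nonneg.2 hr0.le)
    rwa [smul_smul, inv_mul_cancel₀ hr0.ne', one_smul] at this
  have hV0 : 0 ≤ V := sub_nonneg.2 hrS
  have hVq : V ≤ q • 1 := by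
    have := smul_le_smul_of_nonneg_left hS (inv_nonneg.2 hr0.le)
    rw [smul_smul] at this
    rw [hV, hq, sub_smul, one_smul]
    exact sub_le_sub_left this 1
  have hV1 : V ≤ 1 := sub_le_self _ (smul_nonneg (inv_nonneg.2 hr0.le) hS0)
  have hVV : V * V ≤ q • 1 := by
    refine le_trans ?_ hVq
    have := conjugate_le_conjugate_of_nonneg hV1 (CFC.sqrt_nonneg V)
    have hc := CFC.sqrt_mul_sqrt_self V hV0
    rw [mul_one, hc] at this
    calc V * V = CFC.sqrt V * V * CFC.sqrt V := by
          have hgen : ∀ W : H →L[ℂ] H, W * W = V → V * V = W * V * W := by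
            intro W hW; rw [← hW]; simp only [mul_assoc]
          exact hgen _ hc
      _ ≤ V := this
  have hVs : IsSelfAdjoint V := IsSelfAdjoint.of_nonneg hV0
  set P' : H →L[ℂ] H := (2 * r⁻¹) • P with hP'
  have hP'0 : 0 ≤ P' := smul_nonneg (by positivity) hP
  have hP'fin : tau P' ≠ ∞ := by
    rw [hP', tau_smul (by positivity)]; exact ENNReal.mul_ne_top ENNReal.ofReal_ne_top hfin
  have hstep : d ≤ P' + V * d * V := by
    rw [← sub_nonneg]
    have e1 : P' + V * d * V - d = (r⁻¹ * r⁻¹) • (S * d * S) := by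
      have : P' = r⁻¹ • (S * d + d * S) := by rw [h, hP', smul_smul, mul_comm]
      rw [this, hV]
      simp only [sub_mul, mul_sub, one_mul, mul_one, smul_mul_assoc, mul_smul_comm, smul_add,
        smul_sub, smul_smul]
      abel
    rw [e1]
    exact smul_nonneg (by positivity) ((IsSelfAdjoint.of_nonneg hS0).conjugate_nonneg hd)
  set p : ℝ := (tau P').toReal with hp
  have hp0 : 0 ≤ p := ENNReal.toReal_nonneg
  have hpP : tau P' = ENNReal.ofReal p := (ENNReal.ofReal_toReal hP'fin).symm
  set m : ℝ := p / (1 - q) with hm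
  have h1q : 0 < 1 - q := by linarith
  have hm0 : 0 ≤ m := by positivity
  have hmp : p + q * m = m := by
    rw [hm]; field_simp; ring
  have claim : ∀ n : ℕ, ∃ T : H →L[ℂ] H, 0 ≤ T ∧ tau T ≤ ENNReal.ofReal m ∧
      d ≤ T + (q ^ n * ‖d‖) • 1 := by
    intro n
    induction n with
    | zero => exact ⟨0, le_rfl, by simp [tau, opDiag], by simpa using le_norm_smul_one hd⟩
    | succ n ih =>
      obtain ⟨T, hT, hTm, hdT⟩ := ih
      have hT' := hVs.conjugate_nonneg hT
      refine ⟨P' + V * T * V, add_nonneg hP'0 hT', ?_, ?_⟩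
      · rw [tau_add hP'0 hT', tau_conj hVs hT]
        calc _ ≤ ENNReal.ofReal p + ENNReal.ofReal q * ENNReal.ofReal m := by
              rw [hpP]; gcongr
              exact (tau_conj_le hT hq0 hVV).trans (by gcongr)
          _ = ENNReal.ofReal m := by
              rw [← ENNReal.ofReal_mul hq0, ← ENNReal.ofReal_add hp0 (by positivity), hmp]
      · have h1 := hVs.conjugate_le_conjugate hdT
        rw [mul_add, add_mul, mul_smul_comm, mul_one, smul_mul_assoc] at h1
        have h2 := smul_le_smul_of_nonneg_left hVV (by positivity : 0 ≤ q ^ n * ‖d‖)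
        rw [smul_smul] at h2
        have h3 : q ^ (n + 1) * ‖d‖ = q ^ n * ‖d‖ * q := by ring
        rw [h3, add_assoc]
        exact hstep.trans (add_le_add_right (h1.trans (add_le_add_right h2 _)) _)
  refine ne_top_of_le_ne_top (b := ENNReal.ofReal m) ENNReal.ofReal_ne_top
    (tau_le_of_approx fun δ hδ => ?_)
  have hlim : Filter.Tendsto (fun n : ℕ => q ^ n * ‖d‖) Filter.atTop (nhds 0) := by
    simpa using (tendsto_pow_atTop_nhds_zero_of_lt_one hq0 hq1).mul_const ‖d‖
  obtain ⟨n, hn⟩ := (hlim.eventually (gt_mem_nhds hδ)).exists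
  obtain ⟨T, hT, hTm, hdT⟩ := claim n
  exact ⟨T, hT, hTm, hdT.trans (add_le_add_right
    (smul_le_smul_of_nonneg_right hn.le zero_le_one) _)⟩

lemma sqrt_smul_one {e : ℝ} (he : 0 ≤ e) : CFC.sqrt ((e * e) • (1 : H →L[ℂ] H)) = e • 1 :=
  CFC.sqrt_unique (by rw [smul_mul_smul_comm, one_mul]) (smul_nonneg he zero_le_one)

lemma strictPos_smul_one {e : ℝ} (he : 0 < e) : IsStrictlyPositive (e • (1 : H →L[ℂ] H)) :=
  ⟨smul_nonneg he.le zero_le_one, by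
    rw [← Algebra.algebraMap_eq_smul_one]
    exact (isUnit_iff_ne_zero.2 he.ne').map (algebraMap ℝ (H →L[ℂ] H))⟩

lemma tau_eps {X Y P : H →L[ℂ] H} {e : ℝ} (he : 0 < e) (hX : (e * e) • 1 ≤ X) (hXY : X ≤ Y)
    (hP : 0 ≤ P) (hfin : tau P ≠ ∞) :
    tau (CFC.sqrt (Y + P) - CFC.sqrt Y) ≤ tau (CFC.sqrt (X + P) - CFC.sqrt X) := by
  have gen : ∀ Z : H →L[ℂ] H, (e * e) • 1 ≤ Z →
      IsStrictlyPositive (CFC.sqrt (Z + P) + CFC.sqrt Z) ∧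
      tau (CFC.sqrt (Z + P) - CFC.sqrt Z) =
        tau (CFC.sqrt P * Ring.inverse (CFC.sqrt (Z + P) + CFC.sqrt Z) * CFC.sqrt P) := by
    intro Z hZ
    have hZ0 : 0 ≤ Z := (smul_nonneg (by positivity) zero_le_one).trans hZ
    have h1 : e • 1 ≤ CFC.sqrt Z := by
      rw [← sqrt_smul_one he.le]; exact CFC.sqrt_le_sqrt _ _ hZ
    have h2 : e • 1 ≤ CFC.sqrt (Z + P) + CFC.sqrt Z :=
      h1.trans (le_add_of_nonneg_left (CFC.sqrt_nonneg _))
    have hs : IsStrictlyPositive (CFC.sqrt (Z + P) + CFC.sqrt Z) :=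
      (strictPos_smul_one he).of_le h2
    have hd : 0 ≤ CFC.sqrt (Z + P) - CFC.sqrt Z :=
      sub_nonneg.2 (CFC.sqrt_le_sqrt _ _ (le_add_of_nonneg_right hP))
    have heq : (CFC.sqrt (Z + P) + CFC.sqrt Z) * (CFC.sqrt (Z + P) - CFC.sqrt Z) +
        (CFC.sqrt (Z + P) - CFC.sqrt Z) * (CFC.sqrt (Z + P) + CFC.sqrt Z) = (2 : ℝ) • P := by
      have a1 := CFC.sqrt_mul_sqrt_self (Z + P) (add_nonneg hZ0 hP)
      have a2 := CFC.sqrt_mul_sqrt_self Z hZ0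
      have a3 : (CFC.sqrt (Z + P) + CFC.sqrt Z) * (CFC.sqrt (Z + P) - CFC.sqrt Z) +
        (CFC.sqrt (Z + P) - CFC.sqrt Z) * (CFC.sqrt (Z + P) + CFC.sqrt Z) =
        (CFC.sqrt (Z + P) * CFC.sqrt (Z + P) - CFC.sqrt Z * CFC.sqrt Z) +
        (CFC.sqrt (Z + P) * CFC.sqrt (Z + P) - CFC.sqrt Z * CFC.sqrt Z) := by noncomm_ring
      rw [a3, a1, a2, two_smul]; abel
    exact ⟨hs, tau_identity hs.nonneg hs.isUnit hd hP (tau_finite he h2 hd hP hfin heq) heq⟩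
  have hY := hX.trans hXY
  rw [(gen Y hY).2, (gen X hX).2]
  apply tau_mono
  refine conjugate_le_conjugate_of_nonneg ?_ (CFC.sqrt_nonneg _)
  exact CStarAlgebra.ringInverse_le_ringInverse
    (add_le_add (CFC.sqrt_le_sqrt _ _ (add_le_add_left hXY P)) (CFC.sqrt_le_sqrt _ _ hXY))
    (gen X hX).1

lemma sqrt_eps_antitone {X Y : H →L[ℂ] H} (hX : 0 ≤ X) (hXY : X ≤ Y) {e : ℝ} (he : 0 < e) :
    CFC.sqrt (Y + (e * e) • 1) - CFC.sqrt Y ≤ CFC.sqrt (X + (e * e) • 1) - CFC.sqrt X := by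
  have he1 : (0 : H →L[ℂ] H) ≤ (e * e) • 1 := smul_nonneg (by positivity) zero_le_one
  have gen : ∀ Z : H →L[ℂ] H, 0 ≤ Z →
      IsStrictlyPositive (CFC.sqrt (Z + (e * e) • 1) + CFC.sqrt Z) ∧
      CFC.sqrt (Z + (e * e) • 1) - CFC.sqrt Z =
        (e * e) • Ring.inverse (CFC.sqrt (Z + (e * e) • 1) + CFC.sqrt Z) := by
    intro Z hZ
    have h1 : e • 1 ≤ CFC.sqrt (Z + (e * e) • 1) := by
      rw [← sqrt_smul_one he.le]; exact CFC.sqrt_le_sqrt _ _ (le_add_of_nonneg_left hZ)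
    have hs : IsStrictlyPositive (CFC.sqrt (Z + (e * e) • 1) + CFC.sqrt Z) :=
      (strictPos_smul_one he).of_le (h1.trans (le_add_of_nonneg_right (CFC.sqrt_nonneg _)))
    refine ⟨hs, ?_⟩
    have a1 := CFC.sqrt_mul_sqrt_self (Z + (e * e) • 1) (add_nonneg hZ he1)
    have a2 := CFC.sqrt_mul_sqrt_self Z hZ
    have c1 : Commute Z (CFC.sqrt Z) := (Commute.cfcₙ_nnreal (Commute.refl Z) _).symm
    have c2 : Commute (Z + (e * e) • 1) (CFC.sqrt Z) :=
      c1.add_left ((Commute.one_left _).smul_left _)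
    have c3 : Commute (CFC.sqrt (Z + (e * e) • 1)) (CFC.sqrt Z) := Commute.cfcₙ_nnreal c2 _
    have a3 : (CFC.sqrt (Z + (e * e) • 1) + CFC.sqrt Z) *
        (CFC.sqrt (Z + (e * e) • 1) - CFC.sqrt Z) = (e * e) • 1 := by
      rw [add_mul, mul_sub, mul_sub, a1, a2, c3.eq]; abel
    have a4 := congrArg (fun T => Ring.inverse (CFC.sqrt (Z + (e * e) • 1) + CFC.sqrt Z) * T) a3
    simp only [← mul_assoc] at a4
    rw [Ring.inverse_mul_cancel _ hs.isUnit, one_mul, mul_smul_comm, mul_one] at a4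
    exact a4
  rw [(gen Y (hX.trans hXY)).2, (gen X hX).2]
  refine smul_le_smul_of_nonneg_left ?_ (by positivity)
  exact CStarAlgebra.ringInverse_le_ringInverse
    (add_le_add (CFC.sqrt_le_sqrt _ _ (add_le_add_left hXY _)) (CFC.sqrt_le_sqrt _ _ hXY))
    (gen X hX).1

lemma sqrt_add_eps_le {Y : H →L[ℂ] H} (hY : 0 ≤ Y) {e : ℝ} (he : 0 < e) :
    CFC.sqrt (Y + (e * e) • 1) ≤ CFC.sqrt Y + e • 1 := by
  have h0 : 0 ≤ CFC.sqrt Y + e • 1 :=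
    add_nonneg (CFC.sqrt_nonneg _) (smul_nonneg he.le zero_le_one)
  have h1 : (CFC.sqrt Y + e • 1) * (CFC.sqrt Y + e • 1) =
      Y + (e * e) • 1 + (2 * e) • CFC.sqrt Y := by
    rw [add_mul, mul_add, mul_add, CFC.sqrt_mul_sqrt_self Y hY, smul_mul_smul_comm, one_mul,
      mul_smul_comm, smul_mul_assoc, mul_one, one_mul, two_mul, add_smul]
    abel
  rw [← CFC.sqrt_mul_self _ h0, h1]
  exact CFC.sqrt_le_sqrt _ _
    (le_add_of_nonneg_right (smul_nonneg (by positivity) (CFC.sqrt_nonneg _)))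

lemma tau_main {X Y P : H →L[ℂ] H} (hX : 0 ≤ X) (hXY : X ≤ Y) (hP : 0 ≤ P) (hfin : tau P ≠ ∞) :
    tau (CFC.sqrt (Y + P) - CFC.sqrt Y) ≤ tau (CFC.sqrt (X + P) - CFC.sqrt X) := by
  refine tau_le_of_approx fun e he => ?_
  have he1 : (0 : H →L[ℂ] H) ≤ (e * e) • 1 := smul_nonneg (by positivity) zero_le_one
  refine ⟨CFC.sqrt (Y + (e * e) • 1 + P) - CFC.sqrt (Y + (e * e) • 1),
    sub_nonneg.2 (CFC.sqrt_le_sqrt _ _ (le_add_of_nonneg_right hP)), ?_, ?_⟩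
  · refine (tau_eps he (le_add_of_nonneg_left hX) (add_le_add_left hXY _) hP hfin).trans
      (tau_mono ?_)
    have h := sqrt_eps_antitone hX (le_add_of_nonneg_right hP) he
    rw [add_right_comm, sub_le_iff_le_add] at h
    rw [sub_le_iff_le_add]
    refine h.trans (le_of_eq ?_)
    abel
  · have h1 := sqrt_add_eps_le (hX.trans hXY) he
    have h2 : CFC.sqrt (Y + P) ≤ CFC.sqrt (Y + (e * e) • 1 + P) :=
      CFC.sqrt_le_sqrt _ _ (by rw [add_right_comm]; exact le_add_of_nonneg_right he1)
    rw [sub_le_iff_le_add]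
    have h3 : CFC.sqrt (Y + P) + CFC.sqrt (Y + (e * e) • 1) ≤
        CFC.sqrt (Y + (e * e) • 1 + P) + (CFC.sqrt Y + e • 1) := add_le_add h2 h1
    rw [← le_sub_iff_add_le] at h3
    refine h3.trans (le_of_eq ?_)
    abel

lemma summable_of_tau {T : H →L[ℂ] H} (hT : 0 ≤ T) (h : tau T ≠ ∞) : Summable (opDiag T) := by
  have := ENNReal.summable_toReal h
  refine this.congr fun i => ENNReal.toReal_ofReal (opDiag_nonneg hT i)

lemma tau_eq_of_summable {T : H →L[ℂ] H} (hT : 0 ≤ T) (h : Summable (opDiag T)) :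
    tau T = ENNReal.ofReal (opTrace T) :=
  (ENNReal.ofReal_tsum_of_nonneg (opDiag_nonneg hT) h).symm

end Helpers

/-- For `A` positive trace class and `B, C` positive bounded with `B² ≤ C²`,
`Tr[(A² + C²)^{1/2} − C] ≤ Tr[(A² + B²)^{1/2} − B]`, both operators being positive trace
class. -/
theorem trace_sqrt_sub_antitone {H : Type*} [NormedAddCommGroup H] [InnerProductSpace ℂ H]
    [CompleteSpace H] (A B C : H →L[ℂ] H) (hA : IsPosTraceClass A) (hB : 0 ≤ B) (hC : 0 ≤ C)
    (hBC : B ^ 2 ≤ C ^ 2) :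
    IsPosTraceClass (CFC.sqrt (A ^ 2 + B ^ 2) - B) ∧
    IsPosTraceClass (CFC.sqrt (A ^ 2 + C ^ 2) - C) ∧
    opTrace (CFC.sqrt (A ^ 2 + C ^ 2) - C) ≤ opTrace (CFC.sqrt (A ^ 2 + B ^ 2) - B) := by
  obtain ⟨hA0, hAs⟩ := hA
  have hAfin : tau A ≠ ⊤ := by rw [tau_eq_of_summable hA0 hAs]; exact ENNReal.ofReal_ne_top
  have hAsa := IsSelfAdjoint.of_nonneg hA0
  have sq0 : ∀ T : H →L[ℂ] H, 0 ≤ T → 0 ≤ T ^ 2 := fun T hT => by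
    have := conjugate_nonneg_of_nonneg (zero_le_one (α := H →L[ℂ] H)) hT
    rwa [mul_one, ← pow_two] at this
  have hP := sq0 A hA0
  have hPfin : tau (A ^ 2) ≠ ⊤ := by
    have h1 := tau_conj_le hA0 (norm_nonneg A) (le_norm_smul_one hA0)
    have h2 : CFC.sqrt A * A * CFC.sqrt A = A ^ 2 := by
      have hgen : ∀ W : H →L[ℂ] H, W * W = A → W * A * W = A ^ 2 := by
        intro W hW; rw [← hW, pow_two]; simp only [mul_assoc]
      exact hgen _ (CFC.sqrt_mul_sqrt_self A hA0)
    rw [h2] at h1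
    exact ne_top_of_le_ne_top (ENNReal.mul_ne_top ENNReal.ofReal_ne_top hAfin) h1
  have pos : ∀ T : H →L[ℂ] H, 0 ≤ T → 0 ≤ CFC.sqrt (A ^ 2 + T ^ 2) - T := fun T hT => by
    have := CFC.sqrt_le_sqrt _ _ (le_add_of_nonneg_left hP : T ^ 2 ≤ A ^ 2 + T ^ 2)
    rw [CFC.sqrt_sq T hT] at this
    exact sub_nonneg.2 this
  have main : ∀ S T : H →L[ℂ] H, 0 ≤ S → 0 ≤ T → S ^ 2 ≤ T ^ 2 →
      tau (CFC.sqrt (A ^ 2 + T ^ 2) - T) ≤ tau (CFC.sqrt (A ^ 2 + S ^ 2) - S) := by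
    intro S T hS hT hST
    have := tau_main (sq0 S hS) hST hP hPfin
    rwa [CFC.sqrt_sq S hS, CFC.sqrt_sq T hT, add_comm (T ^ 2), add_comm (S ^ 2)] at this
  have fin : ∀ T : H →L[ℂ] H, 0 ≤ T → tau (CFC.sqrt (A ^ 2 + T ^ 2) - T) ≠ ⊤ := fun T hT => by
    have := main 0 T le_rfl hT (by rw [zero_pow two_ne_zero]; exact sq0 T hT)
    rw [zero_pow two_ne_zero, add_zero, sub_zero, CFC.sqrt_sq A hA0] at this
    exact ne_top_of_le_ne_top hAfin this
  have sB := summable_of_tau (pos B hB) (fin B hB)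
  have sC := summable_of_tau (pos C hC) (fin C hC)
  refine ⟨⟨pos B hB, sB⟩, ⟨pos C hC, sC⟩, ?_⟩
  have h := main B C hB hC hBC
  rw [tau_eq_of_summable (pos B hB) sB, tau_eq_of_summable (pos C hC) sC] at h
  exact (ENNReal.ofReal_le_ofReal_iff (tsum_nonneg (opDiag_nonneg (pos B hB)))).1 h
end

section
/- Let A and B be positive bounded operators on a complex Hilbert space H and let ε > 0. Then (A^2 + B^2 + ε·1)^{1/2} − (B^2 + ε·1)^{1/2} ≤ (A^2 + B^2)^{1/2} − B in the Loewner order. -/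
set_option synthInstance.maxHeartbeats 1000000
set_option maxHeartbeats 1000000

open scoped InnerProductSpace

theorem sqrt_aux_mul {H : Type*} [NormedAddCommGroup H] [InnerProductSpace ℂ H]
    [CompleteSpace H] (X : H →L[ℂ] H) (hX : 0 ≤ X) (ε : ℝ) (hε : 0 < ε) :
    ∃ u : (H →L[ℂ] H)ˣ, (u : H →L[ℂ] H) = CFC.sqrt (X + ε • (1 : H →L[ℂ] H)) + CFC.sqrt X ∧
      CFC.sqrt (X + ε • (1 : H →L[ℂ] H)) - CFC.sqrt X = ε • (↑u⁻¹ : H →L[ℂ] H) := by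
  have h1 : (0 : H →L[ℂ] H) ≤ 1 := zero_le_one
  have hXe : 0 ≤ X + ε • (1 : H →L[ℂ] H) := add_nonneg hX (smul_nonneg hε.le h1)
  have hc0 : Commute X (X + ε • (1 : H →L[ℂ] H)) :=
    (Commute.refl X).add_right ((Commute.one_right X).smul_right ε)
  have hc1 : Commute (CFC.sqrt X) (X + ε • (1 : H →L[ℂ] H)) := hc0.cfcₙ_nnreal _
  have hc : Commute (CFC.sqrt (X + ε • (1 : H →L[ℂ] H))) (CFC.sqrt X) :=
    hc1.symm.cfcₙ_nnreal _
  have hP := CFC.sqrt_mul_sqrt_self _ hXe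
  have hQ := CFC.sqrt_mul_sqrt_self X hX
  set P := CFC.sqrt (X + ε • (1 : H →L[ℂ] H))
  set Q := CFC.sqrt X
  have e1 : (P + Q) * (P - Q) = ε • (1 : H →L[ℂ] H) := by
    rw [← hc.mul_self_sub_mul_self_eq, hP, hQ, add_sub_cancel_left]
  have e2 : (P - Q) * (P + Q) = ε • (1 : H →L[ℂ] H) := by
    rw [← hc.mul_self_sub_mul_self_eq', hP, hQ, add_sub_cancel_left]
  refine ⟨⟨P + Q, ε⁻¹ • (P - Q), ?_, ?_⟩, rfl, ?_⟩
  · rw [mul_smul_comm, e1, inv_smul_smul₀ hε.ne']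
  · rw [smul_mul_assoc, e2, inv_smul_smul₀ hε.ne']
  · simp [smul_inv_smul₀ hε.ne']

/-- For `A, B` positive bounded and `ε > 0`,
`(A² + B² + ε)^{1/2} − (B² + ε)^{1/2} ≤ (A² + B²)^{1/2} − B` in the Loewner order. -/
theorem sqrt_perturbation_le {H : Type*} [NormedAddCommGroup H] [InnerProductSpace ℂ H]
    [CompleteSpace H] (A B : H →L[ℂ] H) (hA : 0 ≤ A) (hB : 0 ≤ B) (ε : ℝ) (hε : 0 < ε) :
    CFC.sqrt (A ^ 2 + B ^ 2 + ε • (1 : H →L[ℂ] H)) - CFC.sqrt (B ^ 2 + ε • (1 : H →L[ℂ] H))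
      ≤ CFC.sqrt (A ^ 2 + B ^ 2) - B := by
  have hA2 : 0 ≤ A ^ 2 := by
    rw [sq]
    exact (IsSelfAdjoint.of_nonneg hA).mul_self_nonneg
  have hB2 : 0 ≤ B ^ 2 := by
    rw [sq]
    exact (IsSelfAdjoint.of_nonneg hB).mul_self_nonneg
  have hsB : CFC.sqrt (B ^ 2) = B := by
    rw [sq]
    exact CFC.sqrt_mul_self B hB
  have hle : B ^ 2 ≤ A ^ 2 + B ^ 2 := le_add_of_nonneg_left hA2
  obtain ⟨u, hu, hu'⟩ := sqrt_aux_mul (A ^ 2 + B ^ 2) (add_nonneg hA2 hB2) ε hε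
  obtain ⟨v, hv, hv'⟩ := sqrt_aux_mul (B ^ 2) hB2 ε hε
  have hv0 : 0 ≤ (v : H →L[ℂ] H) := by
    rw [hv]
    exact add_nonneg (CFC.sqrt_nonneg _) (CFC.sqrt_nonneg _)
  have hvu : (v : H →L[ℂ] H) ≤ u := by
    rw [hu, hv]
    exact add_le_add (CFC.sqrt_le_sqrt _ _ (by gcongr)) (CFC.sqrt_le_sqrt _ _ hle)
  have hinv := CStarAlgebra.inv_le_inv hv0 hvu
  have key := smul_le_smul_of_nonneg_left hinv hε.le
  rw [← hu', ← hv', hsB, sub_le_iff_le_add] at key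
  rw [sub_le_iff_le_add]
  refine key.trans (le_of_eq ?_)
  abel
end

section
/- Let A and B be positive bounded invertible operators (with bounded inverses) on a complex Hilbert space H with A ≠ B, and let λ ∈ (0,1). Then the operator λ A^{-1} + (1−λ) B^{-1} − (λ A + (1−λ) B)^{-1} is positive and is not equal to 0. -/
set_option synthInstance.maxHeartbeats 1000000
set_option maxHeartbeats 1000000

open scoped InnerProductSpace

theorem conj_eq_zero_aux {H : Type*} [NormedAddCommGroup H] [InnerProductSpace ℂ H]
    [CompleteSpace H] (A x : H →L[ℂ] H) (hA : 0 ≤ A) (hAu : IsUnit A)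
    (h : star x * A * x = 0) : x = 0 := by
  have hs : CFC.sqrt A * CFC.sqrt A = A := CFC.sqrt_mul_sqrt_self A hA
  have hsa : star (CFC.sqrt A) = CFC.sqrt A := (CFC.sqrt_nonneg A).isSelfAdjoint
  have h1 : star (CFC.sqrt A * x) * (CFC.sqrt A * x) = 0 := by
    rw [star_mul, hsa, ← h]
    conv_rhs => rw [← hs]
    simp only [mul_assoc]
  have h2 : CFC.sqrt A * x = 0 := CStarRing.star_mul_self_eq_zero_iff _ |>.mp h1
  have h3 : A * x = 0 := by rw [← hs, mul_assoc, h2, mul_zero]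
  exact hAu.mul_right_eq_zero.mp h3

/-- For `A ≠ B` positive bounded invertible operators and `λ ∈ (0,1)`, the
operator `λ A⁻¹ + (1−λ) B⁻¹ − (λ A + (1−λ) B)⁻¹` is positive and nonzero. -/
theorem inverse_strictly_convex {H : Type*} [NormedAddCommGroup H] [InnerProductSpace ℂ H]
    [CompleteSpace H] (A B : H →L[ℂ] H) (hA : 0 ≤ A) (hB : 0 ≤ B) (hAu : IsUnit A)
    (hBu : IsUnit B) (hne : A ≠ B) (l : ℝ) (hl : l ∈ Set.Ioo (0 : ℝ) 1) :
    0 ≤ l • Ring.inverse A + (1 - l) • Ring.inverse B - Ring.inverse (l • A + (1 - l) • B) ∧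
    l • Ring.inverse A + (1 - l) • Ring.inverse B - Ring.inverse (l • A + (1 - l) • B) ≠ 0 := by
  obtain ⟨h0, h1⟩ := hl
  have hm : 0 < 1 - l := by linarith
  have sA : IsStrictlyPositive A := hAu.isStrictlyPositive hA
  have sB : IsStrictlyPositive B := hBu.isStrictlyPositive hB
  have sC : IsStrictlyPositive (l • A + (1 - l) • B) := (sA.smul h0).add_nonneg (sB.smul hm).nonneg
  set C := l • A + (1 - l) • B with hC
  have sa : IsSelfAdjoint (Ring.inverse A) := hA.isSelfAdjoint.ringInverse
  have sb : IsSelfAdjoint (Ring.inverse B) := hB.isSelfAdjoint.ringInverse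
  have sc : IsSelfAdjoint (Ring.inverse C) := sC.nonneg.isSelfAdjoint.ringInverse
  have a1 := Ring.inverse_mul_cancel A hAu
  have a2 := Ring.mul_inverse_cancel A hAu
  have b1 := Ring.inverse_mul_cancel B hBu
  have b2 := Ring.mul_inverse_cancel B hBu
  have c1 := Ring.inverse_mul_cancel C sC.isUnit
  have inja : Ring.inverse A = Ring.inverse B → A = B := fun h => by
    rw [← Ring.inverse_inverse hAu, h, Ring.inverse_inverse hBu]
  generalize Ring.inverse A = a at *
  generalize Ring.inverse B = b at *
  generalize Ring.inverse C = c at *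
  have key : l • a + (1 - l) • b - c =
      l • (star (a - c) * A * (a - c)) + (1 - l) • (star (b - c) * B * (b - c)) := by
    rw [(sa.sub sc).star_eq, (sb.sub sc).star_eq]
    have e1 : (a - c) * A * (a - c) = a - c - c + c * A * c := by
      simp only [sub_mul, mul_sub, a1, one_mul]
      rw [mul_assoc c A a, a2, mul_one]; abel
    have e2 : (b - c) * B * (b - c) = b - c - c + c * B * c := by
      simp only [sub_mul, mul_sub, b1, one_mul]
      rw [mul_assoc c B b, b2, mul_one]; abel
    have e3 : l • (c * A * c) + (1 - l) • (c * B * c) = c := by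
      calc _ = c * C * c := by
            rw [hC]; simp only [mul_add, add_mul, mul_smul_comm, smul_mul_assoc]
        _ = c := by rw [c1, one_mul]
    rw [e1, e2]
    calc _ = l • (a - c - c) + (1 - l) • (b - c - c) + c := by module
      _ = l • (a - c - c) + (1 - l) • (b - c - c)
          + (l • (c * A * c) + (1 - l) • (c * B * c)) := by rw [e3]
      _ = _ := by module
  have p1 : 0 ≤ l • (star (a - c) * A * (a - c)) :=
    smul_nonneg h0.le (star_left_conjugate_nonneg hA _)
  have p2 : 0 ≤ (1 - l) • (star (b - c) * B * (b - c)) :=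
    smul_nonneg hm.le (star_left_conjugate_nonneg hB _)
  rw [key]
  refine ⟨add_nonneg p1 p2, fun h => hne (inja ?_)⟩
  obtain ⟨q1, q2⟩ := (add_eq_zero_iff_of_nonneg p1 p2).mp h
  have r1 := conj_eq_zero_aux A _ hA hAu ((smul_eq_zero_iff_right h0.ne').mp q1)
  have r2 := conj_eq_zero_aux B _ hB hBu ((smul_eq_zero_iff_right hm.ne').mp q2)
  rw [sub_eq_zero.mp r1, sub_eq_zero.mp r2]
end

section
/- Let U be a nonempty subset of a real or complex Hilbert space H that is closed in the weak topology, and let f : U → ℝ be lower semicontinuous with respect to the weak topology and coercive, in the sense that f(u) tends to +∞ as ‖u‖ → ∞ along U (for every M ∈ ℝ there is R such that f(u) ≥ M whenever u ∈ U and ‖u‖ ≥ R). Then there exists u₀ ∈ U with f(u₀) = inf_{u ∈ U} f(u). -/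
set_option synthInstance.maxHeartbeats 1000000
set_option maxHeartbeats 1000000

open scoped InnerProductSpace

theorem isCompact_weak_closedBall {𝕜 H : Type*} [RCLike 𝕜]
    [NormedAddCommGroup H] [InnerProductSpace 𝕜 H] [CompleteSpace H] (R : ℝ) :
    IsCompact ((toWeakSpace 𝕜 H) '' Metric.closedBall (0 : H) R) := by
  let g : WeakDual 𝕜 H → WeakSpace 𝕜 H := fun φ =>
    toWeakSpace 𝕜 H ((InnerProductSpace.toDual 𝕜 H).symm (WeakDual.toStrongDual φ))
  have hg : Continuous g := by
    refine WeakBilin.continuous_of_continuous_eval _ fun l => ?_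
    have h : ∀ φ : WeakDual 𝕜 H, (topDualPairing 𝕜 H).flip (g φ) l
        = (starRingEnd 𝕜) (φ ((InnerProductSpace.toDual 𝕜 H).symm l)) := by
      intro φ
      have h1 : l ((InnerProductSpace.toDual 𝕜 H).symm (WeakDual.toStrongDual φ))
        = (starRingEnd 𝕜) (WeakDual.toStrongDual φ ((InnerProductSpace.toDual 𝕜 H).symm l)) := by
        rw [← InnerProductSpace.toDual_symm_apply (y := l),
          ← InnerProductSpace.toDual_symm_apply (y := WeakDual.toStrongDual φ), inner_conj_symm]
      exact h1
    refine (RCLike.continuous_conj.comp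
      (WeakDual.eval_continuous ((InnerProductSpace.toDual 𝕜 H).symm l))).congr ?_
    intro φ
    exact (h φ).symm
  have hc := (WeakDual.isCompact_closedBall (𝕜 := 𝕜) (0 : StrongDual 𝕜 H) R).image hg
  convert hc using 1
  ext x
  constructor
  · rintro ⟨u, hu, rfl⟩
    refine ⟨StrongDual.toWeakDual (InnerProductSpace.toDual 𝕜 H u), ?_, ?_⟩
    · simpa using hu
    · simp [g]
  · rintro ⟨φ, hφ, rfl⟩
    refine ⟨_, ?_, rfl⟩
    simpa using hφ

/-- A weakly lower semicontinuous coercive function on a nonempty weakly closed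
subset of a Hilbert space attains its infimum. -/
theorem exists_minimizer_of_weakly_lsc_coercive {𝕜 H : Type*} [RCLike 𝕜]
    [NormedAddCommGroup H] [InnerProductSpace 𝕜 H] [CompleteSpace H]
    (U : Set H) (hne : U.Nonempty)
    (hclosed : IsClosed ((toWeakSpace 𝕜 H) '' U))
    (f : H → ℝ)
    (hlsc : LowerSemicontinuousOn (f ∘ (toWeakSpace 𝕜 H).symm) ((toWeakSpace 𝕜 H) '' U))
    (hcoercive : ∀ M : ℝ, ∃ R : ℝ, ∀ u ∈ U, R ≤ ‖u‖ → M ≤ f u) :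
    ∃ u₀ ∈ U, f u₀ = sInf (f '' U) := by
  obtain ⟨v, hv⟩ := hne
  obtain ⟨R, hR⟩ := hcoercive (f v)
  have hK : IsCompact ((toWeakSpace 𝕜 H) '' U ∩
      (toWeakSpace 𝕜 H) '' Metric.closedBall (0 : H) (max R ‖v‖)) :=
    (isCompact_weak_closedBall _).inter_left hclosed
  obtain ⟨a, ⟨⟨u, hu, rfl⟩, -⟩, hmin⟩ := LowerSemicontinuousOn.exists_isMinOn
    (s := (toWeakSpace 𝕜 H) '' U ∩ (toWeakSpace 𝕜 H) '' Metric.closedBall (0 : H) (max R ‖v‖))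
    ⟨toWeakSpace 𝕜 H v, ⟨v, hv, rfl⟩, ⟨v, by simp, rfl⟩⟩ hK (hlsc.mono Set.inter_subset_left)
  have key : ∀ w ∈ U, ‖w‖ ≤ max R ‖v‖ → f u ≤ f w := fun w hw hwn => by
    simpa using isMinOn_iff.1 hmin (toWeakSpace 𝕜 H w) ⟨⟨w, hw, rfl⟩, ⟨w, by simpa using hwn, rfl⟩⟩
  refine ⟨u, hu, ?_⟩
  have hl : IsLeast (f '' U) (f u) := by
    refine ⟨⟨u, hu, rfl⟩, ?_⟩
    rintro _ ⟨w, hw, rfl⟩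
    rcases le_total R ‖w‖ with h | h
    · exact (key v hv (le_max_right _ _)).trans (hR w hw h)
    · exact key w hw (h.trans (le_max_left _ _))
  exact hl.csInf_eq.symm
end

section
/- Let y₁ and y₂ be self-adjoint bounded operators on a complex Hilbert space H with y₁ ≥ δ·1 and y₂ ≥ δ·1 for some δ > 0, and let κ₁, κ₂ ∈ H. Then ⟨κ₁ + κ₂, (y₁ + y₂)^{-1}(κ₁ + κ₂)⟩ ≤ ⟨κ₁, y₁^{-1} κ₁⟩ + ⟨κ₂, y₂^{-1} κ₂⟩. -/
set_option synthInstance.maxHeartbeats 1000000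
set_option maxHeartbeats 1000000

open scoped InnerProductSpace

/-- For self-adjoint `y₁, y₂ ≥ δ·1` with `δ > 0` and vectors `κ₁, κ₂`,
`⟨κ₁ + κ₂, (y₁ + y₂)⁻¹(κ₁ + κ₂)⟩ ≤ ⟨κ₁, y₁⁻¹ κ₁⟩ + ⟨κ₂, y₂⁻¹ κ₂⟩`. -/
theorem inner_inverse_sum_le {H : Type*} [NormedAddCommGroup H] [InnerProductSpace ℂ H]
    [CompleteSpace H] (δ : ℝ) (hδ : 0 < δ) (y₁ y₂ : H →L[ℂ] H)
    (hy₁ : IsSelfAdjoint y₁) (hy₂ : IsSelfAdjoint y₂)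
    (h₁ : δ • (1 : H →L[ℂ] H) ≤ y₁) (h₂ : δ • (1 : H →L[ℂ] H) ≤ y₂) (κ₁ κ₂ : H) :
    (⟪κ₁ + κ₂, Ring.inverse (y₁ + y₂) (κ₁ + κ₂)⟫_ℂ).re
      ≤ (⟪κ₁, Ring.inverse y₁ κ₁⟫_ℂ).re + (⟪κ₂, Ring.inverse y₂ κ₂⟫_ℂ).re := by
  have hpos : (0 : H →L[ℂ] H) ≤ δ • (1 : H →L[ℂ] H) := smul_nonneg hδ.le zero_le_one
  have hu : IsUnit (δ • (1 : H →L[ℂ] H)) := by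
    rw [← Algebra.algebraMap_eq_smul_one]
    exact (IsUnit.mk0 δ hδ.ne').map (algebraMap ℝ (H →L[ℂ] H))
  have p₁ : (0 : H →L[ℂ] H) ≤ y₁ := hpos.trans h₁
  have p₂ : (0 : H →L[ℂ] H) ≤ y₂ := hpos.trans h₂
  have u₁ : IsUnit y₁ := CStarAlgebra.isUnit_of_le _ h₁ ⟨hpos, hu⟩
  have u₂ : IsUnit y₂ := CStarAlgebra.isUnit_of_le _ h₂ ⟨hpos, hu⟩
  have u₃ : IsUnit (y₁ + y₂) :=
    CStarAlgebra.isUnit_of_le _ (h₁.trans (le_add_of_nonneg_right p₂)) ⟨hpos, hu⟩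
  have e₁ : y₁ (Ring.inverse y₁ κ₁) = κ₁ := by
    simpa using congrArg (fun f : H →L[ℂ] H => f κ₁) (Ring.mul_inverse_cancel _ u₁)
  have e₂ : y₂ (Ring.inverse y₂ κ₂) = κ₂ := by
    simpa using congrArg (fun f : H →L[ℂ] H => f κ₂) (Ring.mul_inverse_cancel _ u₂)
  have e₃ : (y₁ + y₂) (Ring.inverse (y₁ + y₂) (κ₁ + κ₂)) = κ₁ + κ₂ := by
    have := congrArg (fun f : H →L[ℂ] H => f (κ₁ + κ₂)) (Ring.mul_inverse_cancel _ u₃)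
    simpa only [ContinuousLinearMap.mul_apply, ContinuousLinearMap.one_apply] using this
  generalize Ring.inverse y₁ κ₁ = a at *
  generalize Ring.inverse y₂ κ₂ = b at *
  generalize Ring.inverse (y₁ + y₂) (κ₁ + κ₂) = w at *
  have q₁ := ((ContinuousLinearMap.nonneg_iff_isPositive y₁).1 p₁).re_inner_nonneg_right (a - w)
  have q₂ := ((ContinuousLinearMap.nonneg_iff_isPositive y₂).1 p₂).re_inner_nonneg_right (b - w)
  have s₁ : ⟪a, y₁ w⟫_ℂ = ⟪κ₁, w⟫_ℂ := by rw [← e₁]; exact (hy₁.isSymmetric a w).symm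
  have s₂ : ⟪b, y₂ w⟫_ℂ = ⟪κ₂, w⟫_ℂ := by rw [← e₂]; exact (hy₂.isSymmetric b w).symm
  have hw : ⟪w, y₁ w⟫_ℂ + ⟪w, y₂ w⟫_ℂ = ⟪w, κ₁⟫_ℂ + ⟪w, κ₂⟫_ℂ := by
    rw [← inner_add_right, ← inner_add_right, ← e₃]; rfl
  have hw' := congrArg Complex.re hw
  have c := fun x y : H => inner_re_symm (𝕜 := ℂ) x y
  simp only [map_sub, inner_sub_left, inner_sub_right, e₁, e₂, s₁, s₂, inner_add_left,
    RCLike.re_eq_complex_re, Complex.add_re, Complex.sub_re] at q₁ q₂ hw' c ⊢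
  linarith [c w κ₁, c w κ₂, c a κ₁, c b κ₂]
end

section
/- Let ε ∈ (0,1), let z₁, z₂ be self-adjoint bounded operators on a complex Hilbert space H with z₁ ≥ −ε·1 and z₂ ≥ −ε·1, let η₁, η₂ ∈ H and α ∈ (0,1). Then ⟨α η₁ + (1−α) η₂, (1 + α z₁ + (1−α) z₂)^{-1} (α η₁ + (1−α) η₂)⟩ ≤ α ⟨η₁, (1 + z₁)^{-1} η₁⟩ + (1−α) ⟨η₂, (1 + z₂)^{-1} η₂⟩; that is, the map (z, η) ↦ ⟨η, (1+z)^{-1} η⟩ is jointly convex on {z self-adjoint bounded : z ≥ −ε·1} × H. -/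
set_option synthInstance.maxHeartbeats 1000000
set_option maxHeartbeats 1000000

open scoped InnerProductSpace

section Helpers
variable {H : Type*} [NormedAddCommGroup H] [InnerProductSpace ℂ H] [CompleteSpace H]

lemma aux_unit (ε : ℝ) (hε : ε < 1) (z : H →L[ℂ] H) (hb : -(ε • (1 : H →L[ℂ] H)) ≤ z) :
    IsUnit (1 + z) := by
  have h1 : (1 - ε) • (1 : H →L[ℂ] H) ≤ 1 + z := by
    have := add_le_add_right hb (1 : H →L[ℂ] H)
    rw [sub_smul, one_smul, sub_eq_add_neg]
    exact this
  have h0 : 0 < 1 - ε := by linarith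
  refine CStarAlgebra.isUnit_of_le _ h1 ?_
  exact IsStrictlyPositive.smul h0 isStrictlyPositive_one

lemma aux_pos (ε : ℝ) (hε : ε < 1) (z : H →L[ℂ] H) (hb : -(ε • (1 : H →L[ℂ] H)) ≤ z) :
    (1 + z).IsPositive := by
  rw [← ContinuousLinearMap.nonneg_iff_isPositive]
  have h1 : (1 - ε) • (1 : H →L[ℂ] H) ≤ 1 + z := by
    have := add_le_add_right hb (1 : H →L[ℂ] H)
    rw [sub_smul, one_smul, sub_eq_add_neg]
    exact this
  have h0 : 0 < 1 - ε := by linarith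
  exact (IsStrictlyPositive.smul h0 isStrictlyPositive_one).nonneg.trans h1

lemma aux_inv (A : H →L[ℂ] H) (hA : IsUnit A) (η : H) : A (Ring.inverse A η) = η := by
  have := congrArg (fun T : H →L[ℂ] H => T η) (Ring.mul_inverse_cancel A hA)
  simpa using this

lemma aux_var (A : H →L[ℂ] H) (hA : IsUnit A) (hp : A.IsPositive) (η ξ : H) :
    2 * (⟪ξ, η⟫_ℂ).re - (⟪ξ, A ξ⟫_ℂ).re ≤ (⟪η, Ring.inverse A η⟫_ℂ).re := by
  have h := aux_inv A hA η
  set u := Ring.inverse A η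
  have h2 : 0 ≤ (⟪u - ξ, A (u - ξ)⟫_ℂ).re := hp.re_inner_nonneg_right _
  have h3 : ⟪u, A ξ⟫_ℂ = ⟪η, ξ⟫_ℂ := by
    rw [← h]; exact (hp.isSymmetric u ξ).symm
  have h4 : (⟪η, ξ⟫_ℂ).re = (⟪ξ, η⟫_ℂ).re := inner_re_symm (𝕜 := ℂ) _ _
  have h5 : (⟪η, u⟫_ℂ).re = (⟪u, η⟫_ℂ).re := inner_re_symm (𝕜 := ℂ) _ _
  rw [map_sub, h, inner_sub_left, inner_sub_right, inner_sub_right, h3] at h2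
  simp only [Complex.sub_re] at h2
  linarith

end Helpers

/-- Joint convexity of `(z, η) ↦ ⟨η, (1+z)⁻¹ η⟩` on
`{z self-adjoint : z ≥ −ε·1} × H` for `ε ∈ (0,1)`. -/
theorem inner_inverse_jointly_convex {H : Type*} [NormedAddCommGroup H]
    [InnerProductSpace ℂ H] [CompleteSpace H] (ε : ℝ) (hε : ε ∈ Set.Ioo (0 : ℝ) 1)
    (z₁ z₂ : H →L[ℂ] H) (hz₁ : IsSelfAdjoint z₁) (hz₂ : IsSelfAdjoint z₂)
    (hb₁ : -(ε • (1 : H →L[ℂ] H)) ≤ z₁) (hb₂ : -(ε • (1 : H →L[ℂ] H)) ≤ z₂)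
    (η₁ η₂ : H) (α : ℝ) (hα : α ∈ Set.Ioo (0 : ℝ) 1) :
    (⟪α • η₁ + (1 - α) • η₂,
        Ring.inverse (1 + α • z₁ + (1 - α) • z₂) (α • η₁ + (1 - α) • η₂)⟫_ℂ).re
      ≤ α * (⟪η₁, Ring.inverse (1 + z₁) η₁⟫_ℂ).re
        + (1 - α) * (⟪η₂, Ring.inverse (1 + z₂) η₂⟫_ℂ).re := by
  obtain ⟨ha0, ha1⟩ := hα
  have hε1 := hε.2
  have hb : -(ε • (1 : H →L[ℂ] H)) ≤ α • z₁ + (1 - α) • z₂ := by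
    have e1 := smul_le_smul_of_nonneg_left hb₁ ha0.le
    have e2 := smul_le_smul_of_nonneg_left hb₂ (sub_nonneg.2 ha1.le)
    refine le_trans (le_of_eq ?_) (add_le_add e1 e2)
    module
  have hu := aux_unit ε hε1 _ hb
  have v1 := aux_var _ (aux_unit ε hε1 _ hb₁) (aux_pos ε hε1 _ hb₁) η₁
  have v2 := aux_var _ (aux_unit ε hε1 _ hb₂) (aux_pos ε hε1 _ hb₂) η₂
  rw [← add_assoc] at hu
  have h := aux_inv _ hu (α • η₁ + (1 - α) • η₂)
  set ξ := Ring.inverse (1 + α • z₁ + (1 - α) • z₂) (α • η₁ + (1 - α) • η₂)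
  have w1 := mul_le_mul_of_nonneg_left (v1 ξ) ha0.le
  have w2 := mul_le_mul_of_nonneg_left (v2 ξ) (sub_nonneg.2 ha1.le)
  have h5 : (⟪α • η₁ + (1 - α) • η₂, ξ⟫_ℂ).re = (⟪ξ, α • η₁ + (1 - α) • η₂⟫_ℂ).re :=
    inner_re_symm (𝕜 := ℂ) _ _
  have h6 : (⟪ξ, α • η₁ + (1 - α) • η₂⟫_ℂ).re
      = α * (⟪ξ, η₁⟫_ℂ).re + (1 - α) * (⟪ξ, η₂⟫_ℂ).re := by
    rw [inner_add_right, inner_smul_right_eq_smul, inner_smul_right_eq_smul]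
    simp only [Complex.add_re, Complex.real_smul, Complex.re_ofReal_mul]
  have h7 : (⟪ξ, α • η₁ + (1 - α) • η₂⟫_ℂ).re
      = α * (⟪ξ, (1 + z₁) ξ⟫_ℂ).re + (1 - α) * (⟪ξ, (1 + z₂) ξ⟫_ℂ).re := by
    have : α • η₁ + (1 - α) • η₂ = α • ((1 + z₁) ξ) + (1 - α) • ((1 + z₂) ξ) := by
      rw [← h]
      simp only [ContinuousLinearMap.add_apply, ContinuousLinearMap.smul_apply]
      module
    rw [this, inner_add_right, inner_smul_right_eq_smul, inner_smul_right_eq_smul]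
    simp only [Complex.add_re, Complex.real_smul, Complex.re_ofReal_mul]
  rw [h5]
  linarith
end

section
/- Let ε ∈ (0,1) and let z be a self-adjoint Hilbert–Schmidt operator on a complex Hilbert space H with z ≥ −ε·1. Then z²(1+z)^{-1} is a positive trace-class operator and Tr[z²(1+z)^{-1}] ≥ ‖z‖²_HS / (1 + ‖z‖_op) ≥ ‖z‖²_HS / (1 + ‖z‖_HS) ≥ (1/2) · min{‖z‖_HS, ‖z‖²_HS}, where ‖z‖_op denotes the operator norm and ‖z‖_HS the Hilbert–Schmidt norm. -/
set_option synthInstance.maxHeartbeats 1000000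
set_option maxHeartbeats 1000000

open scoped InnerProductSpace

theorem opDiag_mono_aux {H : Type*} [NormedAddCommGroup H] [InnerProductSpace ℂ H]
    [CompleteSpace H] {A B : H →L[ℂ] H} (h : A ≤ B) (i : (exists_hilbertBasis ℂ H).choose) :
    opDiag A i ≤ opDiag B i := by
  have h1 := ((ContinuousLinearMap.le_def A B).1 h).re_inner_nonneg_right (traceBasis H i)
  rw [ContinuousLinearMap.sub_apply, inner_sub_right, map_sub] at h1
  exact sub_nonneg.1 h1

theorem opDiag_smul_aux {H : Type*} [NormedAddCommGroup H] [InnerProductSpace ℂ H]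
    [CompleteSpace H] (c : ℝ) (A : H →L[ℂ] H) (i : (exists_hilbertBasis ℂ H).choose) :
    opDiag (c • A) i = c * opDiag A i := by
  unfold opDiag
  rw [ContinuousLinearMap.smul_apply, ← Complex.coe_smul, inner_smul_right, Complex.re_ofReal_mul]

theorem opDiag_sq_aux {H : Type*} [NormedAddCommGroup H] [InnerProductSpace ℂ H]
    [CompleteSpace H] (A : H →L[ℂ] H) (i : (exists_hilbertBasis ℂ H).choose) :
    opDiag (star A * A) i = ‖A (traceBasis H i)‖ ^ 2 := by
  unfold opDiag
  rw [ContinuousLinearMap.star_eq_adjoint, ContinuousLinearMap.mul_apply,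
    ContinuousLinearMap.adjoint_inner_right]
  exact inner_self_eq_norm_sq (𝕜 := ℂ) _

theorem parseval_aux {H : Type*} [NormedAddCommGroup H] [InnerProductSpace ℂ H]
    [CompleteSpace H] (x : H) :
    HasSum (fun i => ‖⟪traceBasis H i, x⟫_ℂ‖ ^ 2) (‖x‖ ^ 2) := by
  have h := (traceBasis H).hasSum_inner_mul_inner x x
  have h2 := Complex.hasSum_re h
  have e : (⟪x, x⟫_ℂ).re = ‖x‖ ^ 2 := inner_self_eq_norm_sq (𝕜 := ℂ) x
  rw [e] at h2
  convert h2 using 2 with i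
  rw [← inner_conj_symm x, ← Complex.normSq_eq_conj_mul_self, Complex.ofReal_re,
    Complex.normSq_eq_norm_sq]

theorem norm_le_hsNorm_aux {H : Type*} [NormedAddCommGroup H] [InnerProductSpace ℂ H]
    [CompleteSpace H] (z : H →L[ℂ] H) (hz : IsSelfAdjoint z) (hzHS : IsHilbertSchmidt z) :
    ‖z‖ ≤ hsNorm z := by
  refine ContinuousLinearMap.opNorm_le_bound _ (Real.sqrt_nonneg _) fun x => ?_
  have h0 : 0 ≤ opTrace (star z * z) := tsum_nonneg fun i => by
    rw [opDiag_sq_aux]; positivity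
  have key : ‖z x‖ ^ 2 ≤ opTrace (star z * z) * ‖x‖ ^ 2 := by
    refine hasSum_le (fun i => ?_) (parseval_aux (z x)) (hzHS.hasSum.mul_right (‖x‖ ^ 2))
    rw [opDiag_sq_aux, ← mul_pow]
    have : ⟪traceBasis H i, z x⟫_ℂ = ⟪z (traceBasis H i), x⟫_ℂ := by
      rw [← ContinuousLinearMap.adjoint_inner_left, ← ContinuousLinearMap.star_eq_adjoint,
        hz.star_eq]
    rw [this]
    gcongr
    exact norm_inner_le_norm _ _
  refine (sq_le_sq₀ (norm_nonneg _) (mul_nonneg (Real.sqrt_nonneg _) (norm_nonneg _))).1 ?_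
  rw [mul_pow, Real.sq_sqrt h0]
  exact key

/-- For `z` self-adjoint Hilbert–Schmidt with `z ≥ −ε·1`, `ε ∈ (0,1)`, the
operator `z²(1+z)⁻¹` is positive trace class and
`Tr[z²(1+z)⁻¹] ≥ ‖z‖²_HS/(1+‖z‖_op) ≥ ‖z‖²_HS/(1+‖z‖_HS) ≥ (1/2)·min{‖z‖_HS, ‖z‖²_HS}`. -/
theorem coercivity_trace_bound {H : Type*} [NormedAddCommGroup H] [InnerProductSpace ℂ H]
    [CompleteSpace H] (ε : ℝ) (hε : ε ∈ Set.Ioo (0 : ℝ) 1) (z : H →L[ℂ] H)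
    (hz : IsSelfAdjoint z) (hzHS : IsHilbertSchmidt z)
    (hzb : -(ε • (1 : H →L[ℂ] H)) ≤ z) :
    IsPosTraceClass (z ^ 2 * Ring.inverse (1 + z)) ∧
    hsNorm z ^ 2 / (1 + ‖z‖) ≤ opTrace (z ^ 2 * Ring.inverse (1 + z)) ∧
    hsNorm z ^ 2 / (1 + hsNorm z) ≤ hsNorm z ^ 2 / (1 + ‖z‖) ∧
    (1 / 2) * min (hsNorm z) (hsNorm z ^ 2) ≤ hsNorm z ^ 2 / (1 + hsNorm z) := by
  obtain ⟨hε0, hε1⟩ := hε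
  have hlow : ∀ x ∈ spectrum ℝ z, -ε ≤ x := by
    rw [← algebraMap_le_iff_le_spectrum hz, map_neg, Algebra.algebraMap_eq_smul_one]
    exact hzb
  have hup : ∀ x ∈ spectrum ℝ z, x ≤ ‖z‖ := by
    rw [← le_algebraMap_iff_spectrum_le hz]
    exact hz.le_algebraMap_norm_self
  have hne : ∀ x ∈ spectrum ℝ z, (1 + x) ≠ 0 := fun x hx => by
    have := hlow x hx
    intro h
    linarith
  have hci : ContinuousOn (fun x : ℝ => (1 + x)⁻¹) (spectrum ℝ z) :=
    ContinuousOn.inv₀ (by fun_prop) hne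
  have hc : ContinuousOn (fun x : ℝ => x ^ 2 * (1 + x)⁻¹) (spectrum ℝ z) :=
    ContinuousOn.mul (by fun_prop) hci
  have h1z : cfc (fun x : ℝ => 1 + x) z = 1 + z := by
    rw [cfc_const_add (1 : ℝ) (fun x => x) z, cfc_id' ℝ z, map_one]
  have hW : z ^ 2 * Ring.inverse (1 + z) = cfc (fun x : ℝ => x ^ 2 * (1 + x)⁻¹) z := by
    rw [cfc_mul (fun x : ℝ => x ^ 2) (fun x => (1 + x)⁻¹) z (by fun_prop) hci,
      cfc_pow_id z 2, cfc_inv (fun x : ℝ => 1 + x) z hne, h1z]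
  have hsm : ∀ c : ℝ, cfc (fun x : ℝ => c * x ^ 2) z = c • (star z * z) := fun c => by
    rw [cfc_const_mul c (fun x : ℝ => x ^ 2) z, cfc_pow_id z 2, hz.star_eq, sq]
  have hN : 0 < 1 + ‖z‖ := by positivity
  have hpos : 0 ≤ z ^ 2 * Ring.inverse (1 + z) := by
    rw [hW]
    refine cfc_nonneg fun x hx => ?_
    have : 0 < 1 + x := by linarith [hlow x hx]
    positivity
  have hle1 : (1 + ‖z‖)⁻¹ • (star z * z) ≤ z ^ 2 * Ring.inverse (1 + z) := by
    rw [hW, ← hsm]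
    refine cfc_mono (fun x hx => ?_) (by fun_prop) hc
    have h1 : 0 < 1 + x := by linarith [hlow x hx]
    rw [mul_comm]
    have := hup x hx
    gcongr
  have hle2 : z ^ 2 * Ring.inverse (1 + z) ≤ (1 - ε)⁻¹ • (star z * z) := by
    rw [hW, ← hsm]
    refine cfc_mono (fun x hx => ?_) hc (by fun_prop)
    rw [mul_comm (1 - ε)⁻¹]
    have h1 : 0 < 1 - ε := by linarith
    have h2 : 1 - ε ≤ 1 + x := by linarith [hlow x hx]
    gcongr
  have hS : Summable (opDiag (z ^ 2 * Ring.inverse (1 + z))) := by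
    refine Summable.of_nonneg_of_le (fun i => ?_) (fun i => ?_) (hzHS.mul_left (1 - ε)⁻¹)
    · have := opDiag_mono_aux hpos i
      simpa [opDiag] using this
    · rw [← opDiag_smul_aux]
      exact opDiag_mono_aux hle2 i
  have h0 : 0 ≤ opTrace (star z * z) := tsum_nonneg fun i => by
    rw [opDiag_sq_aux]; positivity
  have hsq : hsNorm z ^ 2 = opTrace (star z * z) := Real.sq_sqrt h0
  have hnn : 0 ≤ hsNorm z := Real.sqrt_nonneg _
  refine ⟨⟨hpos, hS⟩, ?_, ?_, ?_⟩
  · rw [hsq, div_eq_inv_mul]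
    refine hasSum_le (fun i => ?_) (hzHS.hasSum.mul_left (1 + ‖z‖)⁻¹) hS.hasSum
    rw [← opDiag_smul_aux]
    exact opDiag_mono_aux hle1 i
  · have := norm_le_hsNorm_aux z hz hzHS
    gcongr
  · rw [le_div_iff₀ (by positivity)]
    rcases le_total (hsNorm z) 1 with h | h
    · have : min (hsNorm z) (hsNorm z ^ 2) ≤ hsNorm z ^ 2 := min_le_right _ _
      nlinarith [sq_nonneg (hsNorm z)]
    · have : min (hsNorm z) (hsNorm z ^ 2) ≤ hsNorm z := min_le_left _ _
      nlinarith
end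

section
/- Let ε ∈ (0,1/2) and let z, z' be self-adjoint bounded operators on a complex Hilbert space H with z ≥ −ε·1 and z' ≥ −ε·1, and let κ, κ' ∈ H. Then |⟨κ', (1+z')^{-1} κ'⟩ − ⟨κ, (1+z)^{-1} κ⟩| ≤ 4 ‖κ'‖² ‖z − z'‖ + 2 (‖κ'‖ + ‖κ‖) ‖κ' − κ‖, where ‖z − z'‖ is the operator norm. -/
set_option synthInstance.maxHeartbeats 1000000
set_option maxHeartbeats 1000000

open scoped InnerProductSpace

lemma aux_inv_s11 {H : Type*} [NormedAddCommGroup H] [InnerProductSpace ℂ H]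
    [CompleteSpace H] (ε : ℝ) (hε : ε ∈ Set.Ioo (0 : ℝ) (1 / 2)) (z : H →L[ℂ] H)
    (hzb : -(ε • (1 : H →L[ℂ] H)) ≤ z) :
    IsUnit (1 + z) ∧ ∀ x, ‖Ring.inverse (1 + z) x‖ ≤ 2 * ‖x‖ := by
  obtain ⟨h0, h1⟩ := hε
  have hu : IsUnit (1 + z) := by
    refine CStarAlgebra.isUnit_of_le ((1 - ε) • (1 : H →L[ℂ] H)) ?_ ?_
    · have h := add_le_add_right hzb (1 : H →L[ℂ] H)
      refine le_trans (le_of_eq ?_) h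
      rw [sub_smul, one_smul, sub_eq_add_neg]
    · exact IsStrictlyPositive.smul (by linarith) (by simp)
  refine ⟨hu, fun y => ?_⟩
  set x := Ring.inverse (1 + z) y with hx
  have hy : (1 + z) x = y := by
    have := congrArg (fun T : H →L[ℂ] H => T y) (Ring.mul_inverse_cancel _ hu)
    simpa [hx] using this
  have hp := (ContinuousLinearMap.le_def _ _).1 hzb
  have hp2 := hp.re_inner_nonneg_right x
  have hn : RCLike.re ⟪x, x⟫_ℂ = ‖x‖ ^ 2 := inner_self_eq_norm_sq x
  have hzx : z x = y - x := by rw [← hy]; simp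
  have e : (z - -(ε • (1 : H →L[ℂ] H))) x = y - ((1 - ε : ℝ) : ℂ) • x := by
    simp [hzx, sub_smul]
    abel
  rw [e, inner_sub_right, inner_smul_right, map_sub] at hp2
  have e2 : RCLike.re (((1 - ε : ℝ) : ℂ) * ⟪x, x⟫_ℂ) = (1 - ε) * ‖x‖ ^ 2 := by
    rw [← hn]; exact Complex.re_ofReal_mul _ _
  rw [e2] at hp2
  have hc : RCLike.re ⟪x, y⟫_ℂ ≤ ‖x‖ * ‖y‖ := re_inner_le_norm x y
  have hxn := norm_nonneg x
  have hyn := norm_nonneg y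
  rcases hxn.eq_or_lt with h | h
  · rw [← h]; positivity
  · have : ‖x‖ * ((1 - ε) * ‖x‖) ≤ ‖x‖ * ‖y‖ := by nlinarith
    have := le_of_mul_le_mul_left this h
    nlinarith

/-- Continuity estimate for `(z, κ) ↦ ⟨κ, (1+z)⁻¹ κ⟩` when `z, z' ≥ −ε·1`,
`ε ∈ (0,1/2)`. -/
theorem inner_inverse_continuity {H : Type*} [NormedAddCommGroup H] [InnerProductSpace ℂ H]
    [CompleteSpace H] (ε : ℝ) (hε : ε ∈ Set.Ioo (0 : ℝ) (1 / 2)) (z z' : H →L[ℂ] H)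
    (hz : IsSelfAdjoint z) (hz' : IsSelfAdjoint z')
    (hzb : -(ε • (1 : H →L[ℂ] H)) ≤ z) (hz'b : -(ε • (1 : H →L[ℂ] H)) ≤ z') (κ κ' : H) :
    |(⟪κ', Ring.inverse (1 + z') κ'⟫_ℂ).re - (⟪κ, Ring.inverse (1 + z) κ⟫_ℂ).re|
      ≤ 4 * ‖κ'‖ ^ 2 * ‖z - z'‖ + 2 * (‖κ'‖ + ‖κ‖) * ‖κ' - κ‖ := by
  obtain ⟨hu, hb⟩ := aux_inv_s11 ε hε z hzb
  obtain ⟨hu', hb'⟩ := aux_inv_s11 ε hε z' hz'b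
  set A := Ring.inverse (1 + z) with hA
  set B := Ring.inverse (1 + z') with hB
  have hBA : B - A = B * (z - z') * A := by
    have h1 : B * (1 + z') = 1 := Ring.inverse_mul_cancel _ hu'
    have h2 : (1 + z) * A = 1 := Ring.mul_inverse_cancel _ hu
    calc B - A = B * ((1 + z) * A) - (B * (1 + z')) * A := by rw [h1, h2, mul_one, one_mul]
      _ = _ := by noncomm_ring
  have key : ⟪κ', B κ'⟫_ℂ - ⟪κ, A κ⟫_ℂ
      = ⟪κ', B ((z - z') (A κ'))⟫_ℂ + ⟪κ' - κ, A κ'⟫_ℂ + ⟪κ, A (κ' - κ)⟫_ℂ := by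
    have : B ((z - z') (A κ')) = B κ' - A κ' := by
      have := congrArg (fun T : H →L[ℂ] H => T κ') hBA
      simpa using this.symm
    rw [this, map_sub, inner_sub_right, inner_sub_right, inner_sub_left]
    ring
  rw [← Complex.sub_re, key]
  refine (Complex.abs_re_le_norm _).trans ((norm_add₃_le).trans ?_)
  have t1 : ‖⟪κ', B ((z - z') (A κ'))⟫_ℂ‖ ≤ ‖κ'‖ * (2 * (‖z - z'‖ * (2 * ‖κ'‖))) := by
    refine (norm_inner_le_norm _ _).trans ?_
    gcongr
    refine (hb' _).trans ?_
    gcongr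
    refine ((z - z').le_opNorm _).trans ?_
    gcongr
    exact hb _
  have t2 : ‖⟪κ' - κ, A κ'⟫_ℂ‖ ≤ ‖κ' - κ‖ * (2 * ‖κ'‖) := by
    refine (norm_inner_le_norm _ _).trans ?_
    gcongr
    exact hb _
  have t3 : ‖⟪κ, A (κ' - κ)⟫_ℂ‖ ≤ ‖κ‖ * (2 * ‖κ' - κ‖) := by
    refine (norm_inner_le_norm _ _).trans ?_
    gcongr
    exact hb _
  nlinarith
end

section
/- Let B be a self-adjoint bounded operator on a complex Hilbert space H with B ≥ c·1 for some c > 0, and let P be a positive bounded operator. Define z_* := B^{-1/2} (B^{1/2}(P + B)B^{1/2})^{1/2} B^{-1/2} − 1. Then z_* is positive and satisfies the stationarity equation (1 + z_*) B (1 + z_*) = P + B. Moreover, if P is trace class then z_* is trace class. -/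
set_option synthInstance.maxHeartbeats 1000000
set_option maxHeartbeats 1000000

open scoped InnerProductSpace

/-- The partial minimizer `z_* = B^{-1/2} (B^{1/2}(P + B)B^{1/2})^{1/2} B^{-1/2} − 1`. -/
noncomputable def zStar {H : Type*} [NormedAddCommGroup H] [InnerProductSpace ℂ H]
    [CompleteSpace H] (B P : H →L[ℂ] H) : H →L[ℂ] H :=
  Ring.inverse (CFC.sqrt B) * CFC.sqrt (CFC.sqrt B * (P + B) * CFC.sqrt B)
    * Ring.inverse (CFC.sqrt B) - 1


section Helpers

variable {H : Type*} [NormedAddCommGroup H] [InnerProductSpace ℂ H] [CompleteSpace H]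

/-- Weak form of the bound "trace norm of `A` is at most `C`". -/
def TrBdd {ι : Type*} (b : HilbertBasis ι ℂ H) (F : Finset ι) (A : H →L[ℂ] H) (C : ℝ) : Prop :=
  ∀ X Y : H →L[ℂ] H, ∑ i ∈ F, ‖⟪X (b i), A (Y (b i))⟫_ℂ‖ ≤ C * (‖X‖ * ‖Y‖)

lemma hs_bdd {ι : Type*} (b : HilbertBasis ι ℂ H) (F : Finset ι) (K X : H →L[ℂ] H)
    (hK : IsSelfAdjoint K) (hS : Summable fun i => ‖K (b i)‖ ^ 2) :
    ∑ i ∈ F, ‖K (X (b i))‖ ^ 2 ≤ ‖X‖ ^ 2 * ∑' i, ‖K (b i)‖ ^ 2 := by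
  have parseval : ∀ x : H, HasSum (fun j => ‖⟪b j, x⟫_ℂ‖ ^ 2) (‖x‖ ^ 2) := by
    intro x
    have h := Complex.hasSum_re (b.hasSum_inner_mul_inner x x)
    have h2 : (⟪x, x⟫_ℂ).re = ‖x‖ ^ 2 := by
      rw [inner_self_eq_norm_sq_to_K]; norm_cast
    rw [h2] at h
    convert h using 2 with j
    rw [← inner_conj_symm x (b j), ← Complex.normSq_eq_norm_sq, ← Complex.normSq_eq_conj_mul_self,
      Complex.ofReal_re]
  have h1 : HasSum (fun j => ∑ i ∈ F, ‖⟪b j, K (X (b i))⟫_ℂ‖ ^ 2) (∑ i ∈ F, ‖K (X (b i))‖ ^ 2) :=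
    hasSum_sum fun i _ => parseval _
  have h2 := hS.hasSum.mul_left (‖X‖ ^ 2)
  refine hasSum_le (fun j => ?_) h1 h2
  have e : ∀ i, ‖⟪b j, K (X (b i))⟫_ℂ‖ = ‖⟪b i, (star X) (K (b j))⟫_ℂ‖ := by
    intro i
    rw [ContinuousLinearMap.star_eq_adjoint, ContinuousLinearMap.adjoint_inner_right,
      norm_inner_symm]
    rw [← ContinuousLinearMap.adjoint_inner_right, ← ContinuousLinearMap.star_eq_adjoint,
      hK.star_eq]
  simp only [e]
  refine (b.orthonormal.sum_inner_products_le _).trans ?_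
  rw [← mul_pow]
  gcongr
  refine (ContinuousLinearMap.le_opNorm _ _).trans ?_
  rw [norm_star]

lemma trBdd_of_pos {ι : Type*} (b : HilbertBasis ι ℂ H) (F : Finset ι) (P : H →L[ℂ] H)
    (hP : 0 ≤ P) (hS : Summable fun i => (⟪b i, P (b i)⟫_ℂ).re) :
    TrBdd b F P (∑' i, (⟪b i, P (b i)⟫_ℂ).re) := by
  have hK : IsSelfAdjoint (CFC.sqrt P) := IsSelfAdjoint.of_nonneg (CFC.sqrt_nonneg P)
  have hKK := CFC.sqrt_mul_sqrt_self P hP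
  set K := CFC.sqrt P
  have key : ∀ x y : H, ⟪x, P y⟫_ℂ = ⟪K x, K y⟫_ℂ := by
    intro x y
    rw [← hKK, mul_apply_eq_comp, ← ContinuousLinearMap.adjoint_inner_left,
      ← ContinuousLinearMap.star_eq_adjoint, hK.star_eq]
  have hd : ∀ i, (⟪b i, P (b i)⟫_ℂ).re = ‖K (b i)‖ ^ 2 := by
    intro i
    rw [key, inner_self_eq_norm_sq_to_K]; norm_cast
  simp only [hd] at hS ⊢
  intro X Y
  set C := ∑' i, ‖K (b i)‖ ^ 2 with hC
  have hC0 : 0 ≤ C := tsum_nonneg fun _ => by positivity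
  calc ∑ i ∈ F, ‖⟪X (b i), P (Y (b i))⟫_ℂ‖
      ≤ ∑ i ∈ F, ‖K (X (b i))‖ * ‖K (Y (b i))‖ := by
        refine Finset.sum_le_sum fun i _ => ?_
        rw [key]; exact norm_inner_le_norm _ _
    _ ≤ √(∑ i ∈ F, ‖K (X (b i))‖ ^ 2) * √(∑ i ∈ F, ‖K (Y (b i))‖ ^ 2) :=
        Real.sum_mul_le_sqrt_mul_sqrt _ _ _
    _ ≤ √(‖X‖ ^ 2 * C) * √(‖Y‖ ^ 2 * C) := by
        gcongr
        · exact hs_bdd b F K X hK hS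
        · exact hs_bdd b F K Y hK hS
    _ = C * (‖X‖ * ‖Y‖) := by
        rw [Real.sqrt_mul (by positivity), Real.sqrt_mul (by positivity),
          Real.sqrt_sq (norm_nonneg _), Real.sqrt_sq (norm_nonneg _)]
        have := Real.mul_self_sqrt hC0
        linear_combination (‖X‖ * ‖Y‖) * this

lemma TrBdd.conj {ι : Type*} {b : HilbertBasis ι ℂ H} {F : Finset ι} {A : H →L[ℂ] H} {C : ℝ}
    (hC : 0 ≤ C) (h : TrBdd b F A C) (L R : H →L[ℂ] H) :
    TrBdd b F (L * A * R) (C * (‖L‖ * ‖R‖)) := by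
  intro X Y
  have h1 := h (star L * X) (R * Y)
  have e : ∀ i, ⟪X (b i), (L * A * R) (Y (b i))⟫_ℂ
      = ⟪(star L * X) (b i), A ((R * Y) (b i))⟫_ℂ := by
    intro i
    simp only [mul_apply_eq_comp, ContinuousLinearMap.star_eq_adjoint,
      ContinuousLinearMap.adjoint_inner_left]
  simp only [e]
  refine h1.trans ?_
  have a1 : ‖star L * X‖ ≤ ‖L‖ * ‖X‖ := by
    simpa [norm_star] using norm_mul_le (star L) X
  have a2 : ‖R * Y‖ ≤ ‖R‖ * ‖Y‖ := norm_mul_le R Y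
  calc C * (‖star L * X‖ * ‖R * Y‖) ≤ C * ((‖L‖ * ‖X‖) * (‖R‖ * ‖Y‖)) := by gcongr
    _ = _ := by ring

lemma TrBdd.add {ι : Type*} {b : HilbertBasis ι ℂ H} {F : Finset ι} {A A' : H →L[ℂ] H} {C C' : ℝ}
    (h : TrBdd b F A C) (h' : TrBdd b F A' C') : TrBdd b F (A + A') (C + C') := by
  intro X Y
  rw [add_mul]
  refine le_trans ?_ (add_le_add (h X Y) (h' X Y))
  rw [← Finset.sum_add_distrib]
  refine Finset.sum_le_sum fun i _ => ?_
  rw [add_apply, inner_add_right]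
  exact norm_add_le _ _

lemma trBdd_trivial {ι : Type*} (b : HilbertBasis ι ℂ H) (F : Finset ι) (A : H →L[ℂ] H) :
    TrBdd b F A (F.card * ‖A‖) := by
  intro X Y
  have : ∀ i ∈ F, ‖⟪X (b i), A (Y (b i))⟫_ℂ‖ ≤ ‖A‖ * (‖X‖ * ‖Y‖) := by
    intro i _
    have hb : ‖b i‖ = 1 := b.orthonormal.1 i
    have hx : ‖X (b i)‖ ≤ ‖X‖ := by simpa [hb] using X.le_opNorm (b i)
    have hy : ‖Y (b i)‖ ≤ ‖Y‖ := by simpa [hb] using Y.le_opNorm (b i)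
    calc _ ≤ ‖X (b i)‖ * ‖A (Y (b i))‖ := norm_inner_le_norm _ _
      _ ≤ ‖X‖ * (‖A‖ * ‖Y‖) := by
        gcongr
        exact (A.le_opNorm _).trans (by gcongr)
      _ = _ := by ring
  refine (Finset.sum_le_card_nsmul _ _ _ this).trans ?_
  rw [nsmul_eq_mul, mul_assoc]

lemma trBdd_fixed {ι : Type*} (b : HilbertBasis ι ℂ H) (F : Finset ι) (D U V W : H →L[ℂ] H)
    (CW : ℝ) (hCW : 0 ≤ CW) (hW : TrBdd b F W CW) (hr : ‖U‖ * ‖V‖ < 1)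
    (hD : D = U * D * V + W) : TrBdd b F D (CW / (1 - ‖U‖ * ‖V‖)) := by
  set r := ‖U‖ * ‖V‖ with hrdef
  have hr0 : 0 ≤ r := by positivity
  have h1r : 0 < 1 - r := by linarith
  have step : ∀ n : ℕ, TrBdd b F D (CW / (1 - r) + r ^ n * (F.card * ‖D‖)) := by
    intro n
    induction n with
    | zero =>
      intro X Y
      refine (trBdd_trivial b F D X Y).trans ?_
      gcongr
      have : 0 ≤ CW / (1 - r) := by positivity
      simpa using this
    | succ n ih =>
      have h0 : 0 ≤ CW / (1 - r) + r ^ n * (F.card * ‖D‖) :=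
        add_nonneg (div_nonneg hCW h1r.le) (mul_nonneg (pow_nonneg hr0 n)
          (mul_nonneg (Nat.cast_nonneg _) (norm_nonneg _)))
      have h2 := (ih.conj h0 U V).add hW
      rw [← hD, ← hrdef] at h2
      convert h2 using 1
      field_simp
      ring
  intro X Y
  have hl : Filter.Tendsto (fun n : ℕ => (CW / (1 - r) + r ^ n * (F.card * ‖D‖)) * (‖X‖ * ‖Y‖))
      Filter.atTop (nhds ((CW / (1 - r) + 0 * (F.card * ‖D‖)) * (‖X‖ * ‖Y‖))) :=
    (((tendsto_pow_atTop_nhds_zero_of_lt_one hr0 hr).mul_const _).const_add _).mul_const _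
  have := ge_of_tendsto' hl fun n => step n X Y
  simpa using this

lemma norm_le_of_smul_one_le (B V : H →L[ℂ] H) (k : ℝ) (hk : 0 < k)
    (hB : k • (1 : H →L[ℂ] H) ≤ B) (hV : B * V = 1) : ‖V‖ ≤ k⁻¹ := by
  refine ContinuousLinearMap.opNorm_le_bound _ (by positivity) fun x => ?_
  have hp : (B - k • (1 : H →L[ℂ] H)).IsPositive := hB
  have h1 := hp.re_inner_nonneg_right (V x)
  have h2 : B (V x) = x := by
    have := congrArg (fun A : H →L[ℂ] H => A x) hV
    simpa using this
  have h3 : RCLike.re ⟪V x, (B - k • (1 : H →L[ℂ] H)) (V x)⟫_ℂ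
      = RCLike.re ⟪V x, x⟫_ℂ - k * ‖V x‖ ^ 2 := by
    rw [sub_apply, h2, smul_apply,
      one_apply_eq_self, inner_sub_right, map_sub, RCLike.real_smul_eq_coe_smul (K := ℂ),
      inner_smul_right, inner_self_eq_norm_sq_to_K]
    congr 1
    norm_cast
  rw [h3] at h1
  have h4 : RCLike.re ⟪V x, x⟫_ℂ ≤ ‖V x‖ * ‖x‖ := re_inner_le_norm _ _
  rw [inv_mul_eq_div, le_div_iff₀ hk]
  rcases (norm_nonneg (V x)).eq_or_lt with h | h
  · rw [← h]; simp
  · nlinarith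

end Helpers

/-- For `B ≥ c·1` self-adjoint (`c > 0`) and `P` positive bounded, the operator
`z_* = B^{-1/2}(B^{1/2}(P+B)B^{1/2})^{1/2}B^{-1/2} − 1` is positive and satisfies
`(1 + z_*) B (1 + z_*) = P + B`; if moreover `P` is trace class, so is `z_*`. -/
theorem zStar_stationarity {H : Type*} [NormedAddCommGroup H] [InnerProductSpace ℂ H]
    [CompleteSpace H] (B P : H →L[ℂ] H) (c : ℝ) (hc : 0 < c) (hBsa : IsSelfAdjoint B)
    (hB : c • (1 : H →L[ℂ] H) ≤ B) (hP : 0 ≤ P) :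
    0 ≤ zStar B P ∧ (1 + zStar B P) * B * (1 + zStar B P) = P + B ∧
      (IsPosTraceClass P → IsPosTraceClass (zStar B P)) := by
  have hc1 : (0 : H →L[ℂ] H) ≤ c • 1 := smul_nonneg hc.le zero_le_one
  have hB0 : 0 ≤ B := hc1.trans hB
  have hcu : IsUnit (c • (1 : H →L[ℂ] H)) := by
    rw [← Algebra.algebraMap_eq_smul_one]
    exact (IsUnit.mk0 c hc.ne').map _
  have hBu : IsUnit B := CStarAlgebra.isUnit_of_le _ hB ⟨hc1, hcu⟩
  have hSu : IsUnit (CFC.sqrt B) := (CFC.isUnit_sqrt_iff B hB0).2 hBu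
  have hS0 : 0 ≤ CFC.sqrt B := CFC.sqrt_nonneg B
  have hSS : CFC.sqrt B * CFC.sqrt B = B := CFC.sqrt_mul_sqrt_self B hB0
  have hRS : Ring.inverse (CFC.sqrt B) * CFC.sqrt B = 1 := Ring.inverse_mul_cancel _ hSu
  have hSR : CFC.sqrt B * Ring.inverse (CFC.sqrt B) = 1 := Ring.mul_inverse_cancel _ hSu
  unfold zStar
  set S := CFC.sqrt B
  set R := Ring.inverse S
  have hSsa : IsSelfAdjoint S := .of_nonneg hS0
  have hRsa : IsSelfAdjoint R := by
    have h : star R * S = 1 := by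
      have := congrArg star hSR
      rwa [star_mul, hSsa.star_eq, star_one] at this
    calc star R = star R * (S * R) := by rw [hSR, mul_one]
      _ = R := by rw [← mul_assoc, h, one_mul]
  have hle : B * B ≤ S * (P + B) * S := by
    have h : B ≤ P + B := le_add_of_nonneg_left hP
    have := hSsa.conjugate_le_conjugate h
    convert this using 1
    rw [← hSS]; noncomm_ring
  have hBB0 : 0 ≤ B * B := by
    have := star_mul_self_nonneg B
    rwa [hBsa.star_eq] at this
  have hBT : B ≤ CFC.sqrt (S * (P + B) * S) := by
    have := CFC.sqrt_le_sqrt _ _ hle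
    rwa [CFC.sqrt_unique rfl hB0] at this
  have hTT : CFC.sqrt (S * (P + B) * S) * CFC.sqrt (S * (P + B) * S) = S * (P + B) * S :=
    CFC.sqrt_mul_sqrt_self _ (hBB0.trans hle)
  set T := CFC.sqrt (S * (P + B) * S)
  have hRBR : R * B * R = 1 := by
    rw [← hSS, ← mul_assoc, hRS, one_mul, hSR]
  have hz : R * T * R - 1 = R * (T - B) * R := by
    rw [mul_sub, sub_mul, hRBR]
  have hpos : 0 ≤ R * T * R - 1 := by
    have := hRsa.conjugate_le_conjugate hBT
    rw [hRBR] at this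
    exact sub_nonneg.2 this
  refine ⟨hpos, ?_, ?_⟩
  · rw [add_sub_cancel]
    calc R * T * R * B * (R * T * R) = R * T * (R * B * R) * T * R := by noncomm_ring
      _ = R * (T * T) * R := by rw [hRBR]; noncomm_ring
      _ = (R * S) * (P + B) * (S * R) := by rw [hTT]; noncomm_ring
      _ = P + B := by rw [hRS, hSR]; simp
  rintro ⟨-, hPs⟩
  refine ⟨hpos, ?_⟩
  have hdiag0 : ∀ i, 0 ≤ opDiag (R * T * R - 1) i := fun i =>
    ((ContinuousLinearMap.nonneg_iff_isPositive _).1 hpos).re_inner_nonneg_right _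
  -- Sylvester equation
  set s : ℝ := ‖T‖ + c with hs
  have hs0 : 0 < s := by positivity
  have hT0 : 0 ≤ T := hB0.trans hBT
  have hsc : 0 < s + c := by positivity
  have hsB : (s + c) • (1 : H →L[ℂ] H) ≤ s • 1 + B := by
    rw [add_smul]; gcongr
  have hsc1 : (0 : H →L[ℂ] H) ≤ (s + c) • 1 := smul_nonneg hsc.le zero_le_one
  have hscu : IsUnit ((s + c) • (1 : H →L[ℂ] H)) := by
    rw [← Algebra.algebraMap_eq_smul_one]
    exact (IsUnit.mk0 (s + c) hsc.ne').map _
  have hsBu : IsUnit (s • 1 + B) := CStarAlgebra.isUnit_of_le _ hsB ⟨hsc1, hscu⟩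
  obtain ⟨V, hV⟩ : ∃ V, (s • 1 + B) * V = 1 := ⟨_, Ring.mul_inverse_cancel _ hsBu⟩
  have hVn : ‖V‖ ≤ (s + c)⁻¹ := norm_le_of_smul_one_le _ V _ hsc hsB hV
  have hUn : ‖s • (1 : H →L[ℂ] H) - T‖ ≤ s - c := by
    have h1 : T ≤ s • (1 : H →L[ℂ] H) := by
      have h := (IsSelfAdjoint.of_nonneg hT0).le_algebraMap_norm_self
      rw [Algebra.algebraMap_eq_smul_one] at h
      refine h.trans ?_
      rw [hs, add_smul]
      exact le_add_of_nonneg_right hc1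
    have h2 : s • (1 : H →L[ℂ] H) - T ≤ (s - c) • 1 := by
      rw [sub_smul]
      exact sub_le_sub_left (hB.trans hBT) _
    have h3 := CStarAlgebra.norm_le_norm_of_nonneg_of_le (sub_nonneg.2 h1) h2
    refine h3.trans ?_
    have hsc' : 0 ≤ s - c := by rw [hs]; simp
    rw [norm_smul, Real.norm_of_nonneg hsc']
    exact mul_le_of_le_one_right hsc' ContinuousLinearMap.norm_id_le
  have hr : ‖s • (1 : H →L[ℂ] H) - T‖ * ‖V‖ < 1 := by
    have hsc' : 0 ≤ s - c := by rw [hs]; simp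
    calc _ ≤ (s - c) * (s + c)⁻¹ := by gcongr
      _ < 1 := by rw [← div_eq_mul_inv, div_lt_one hsc]; linarith
  have hfix : T - B = (s • (1 : H →L[ℂ] H) - T) * (T - B) * V + S * P * (S * V) := by
    have e1 : T * T = S * P * S + B * B := by
      rw [hTT, ← hSS]; noncomm_ring
    have e2 : (T - B) * (s • 1 + B) = (s • (1 : H →L[ℂ] H) - T) * (T - B) + S * P * S := by
      have : (s • (1 : H →L[ℂ] H) - T) * (T - B) + S * P * S
          = s • (T - B) - T * T + T * B + S * P * S := by
        simp only [sub_mul, mul_sub, smul_mul_assoc, one_mul, smul_sub]; abel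
      rw [this, e1]
      simp only [sub_mul, mul_add, mul_smul_comm, mul_one, smul_sub]; abel
    calc T - B = (T - B) * ((s • 1 + B) * V) := by rw [hV, mul_one]
      _ = ((T - B) * (s • 1 + B)) * V := by rw [mul_assoc]
      _ = _ := by rw [e2, add_mul]; simp only [mul_assoc]
  set CP := ∑' i, (⟪traceBasis H i, P (traceBasis H i)⟫_ℂ).re
  have hCP : 0 ≤ CP := tsum_nonneg fun i =>
    ((ContinuousLinearMap.nonneg_iff_isPositive _).1 hP).re_inner_nonneg_right _
  have hW0 : 0 ≤ CP * (‖S‖ * ‖S * V‖) := by positivity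
  have hD0 : 0 ≤ CP * (‖S‖ * ‖S * V‖) / (1 - ‖s • (1 : H →L[ℂ] H) - T‖ * ‖V‖) :=
    div_nonneg hW0 (by linarith)
  have hmain : ∀ F, TrBdd (traceBasis H) F (R * T * R - 1)
      (CP * (‖S‖ * ‖S * V‖) / (1 - ‖s • (1 : H →L[ℂ] H) - T‖ * ‖V‖) * (‖R‖ * ‖R‖)) := by
    intro F
    rw [hz]
    refine TrBdd.conj hD0 ?_ R R
    exact trBdd_fixed _ F _ _ V _ _ hW0 ((trBdd_of_pos _ F P hP hPs).conj hCP S (S * V)) hr hfix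
  refine summable_of_sum_le hdiag0 fun F => le_trans ?_ (hmain F 1 1)
  refine Finset.sum_le_sum fun i _ => ?_
  exact (le_abs_self _).trans (Complex.abs_re_le_norm _)
end

section
/- Let B be a self-adjoint bounded operator on a complex Hilbert space H with B ≥ c·1 for some c > 0, let P be a positive trace-class operator, and set z_* := B^{-1/2} (B^{1/2}(P + B)B^{1/2})^{1/2} B^{-1/2} − 1 (a positive trace-class operator). Then Tr[B z_*² (1 + z_*)^{-1}] + Tr[P (1 + z_*)^{-1}] = 2 Tr[B z_*] = 2 Tr[(B^{1/2} P B^{1/2} + B²)^{1/2} − B]. -/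
set_option synthInstance.maxHeartbeats 1000000
set_option maxHeartbeats 1000000

open scoped InnerProductSpace

namespace ZS

variable {H : Type*} [NormedAddCommGroup H] [InnerProductSpace ℂ H] [CompleteSpace H]
variable {ι : Type*}

def Bessel (s : Finset ι) (e : ι → H) : Prop :=
  ∀ x : H, ∑ i ∈ s, ‖⟪e i, x⟫_ℂ‖ ^ 2 ≤ ‖x‖ ^ 2

def TCs (s : Finset ι) (A : H →L[ℂ] H) (K : ℝ) : Prop :=
  ∀ e f : ι → H, Bessel s e → Bessel s f → ∑ i ∈ s, ‖⟪e i, A (f i)⟫_ℂ‖ ≤ K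

variable (ι) in
def TC (A : H →L[ℂ] H) : Prop := ∃ K : ℝ, ∀ s : Finset ι, TCs s A K

lemma parseval (g : HilbertBasis ι ℂ H) (x : H) :
    HasSum (fun j => ‖⟪g j, x⟫_ℂ‖ ^ 2) (‖x‖ ^ 2) := by
  have h := g.hasSum_inner_mul_inner x x
  have h2 := Complex.hasSum_re h
  convert h2 using 1
  · ext j
    rw [← inner_conj_symm x (g j), mul_comm, Complex.mul_conj, Complex.ofReal_re,
      Complex.normSq_eq_norm_sq]
  · rw [inner_self_eq_norm_sq_to_K]
    norm_cast

lemma Bessel.norm_le {s : Finset ι} {e : ι → H} (he : Bessel s e) {i : ι} (hi : i ∈ s) :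
    ‖e i‖ ≤ 1 := by
  have h := he (e i)
  have h1 : ‖⟪e i, e i⟫_ℂ‖ ^ 2 ≤ ‖e i‖ ^ 2 :=
    (Finset.single_le_sum (f := fun j => ‖⟪e j, e i⟫_ℂ‖ ^ 2) (fun _ _ => by positivity) hi).trans h
  rw [inner_self_eq_norm_sq_to_K] at h1
  simp only [norm_pow, RCLike.norm_ofReal, abs_norm] at h1
  by_contra! hlt
  nlinarith [sq_nonneg (‖e i‖ ^ 2 - 1)]

lemma Bessel.map {s : Finset ι} {e : ι → H} (he : Bessel s e) (V : H →L[ℂ] H) {u : ℝ}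
    (hu : 0 < u) (hV : ‖V‖ ≤ u) : Bessel s (fun i => ((u⁻¹ : ℝ) : ℂ) • V (e i)) := by
  intro x
  have h := he (((u⁻¹ : ℝ) : ℂ) • (ContinuousLinearMap.adjoint V) x)
  have h2 : ‖((u⁻¹ : ℝ) : ℂ) • (ContinuousLinearMap.adjoint V) x‖ ≤ ‖x‖ := by
    rw [norm_smul, Complex.norm_real, Real.norm_of_nonneg (by positivity), inv_mul_le_iff₀ hu]
    refine ((ContinuousLinearMap.adjoint V).le_opNorm x).trans ?_
    rw [LinearIsometryEquiv.norm_map]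
    gcongr
  refine le_trans (le_of_eq ?_) (h.trans (by gcongr))
  refine Finset.sum_congr rfl fun i _ => ?_
  rw [inner_smul_left, inner_smul_right, Complex.conj_ofReal,
    ContinuousLinearMap.adjoint_inner_right]

lemma TCs.mul_left {s : Finset ι} {A : H →L[ℂ] H} {K : ℝ} (h : TCs s A K) (U : H →L[ℂ] H)
    {u : ℝ} (hu : 0 < u) (hU : ‖U‖ ≤ u) : TCs s (U * A) (u * K) := by
  intro e f he hf
  have := h _ f (he.map (ContinuousLinearMap.adjoint U) hu (by
    rwa [LinearIsometryEquiv.norm_map])) hf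
  rw [← inv_mul_le_iff₀ hu, Finset.mul_sum]
  refine le_trans (le_of_eq ?_) this
  refine Finset.sum_congr rfl fun i _ => ?_
  rw [inner_smul_left, Complex.conj_ofReal, ContinuousLinearMap.adjoint_inner_left, norm_mul,
    Complex.norm_real, Real.norm_of_nonneg (by positivity)]
  rfl

lemma TCs.mul_right {s : Finset ι} {A : H →L[ℂ] H} {K : ℝ} (h : TCs s A K) (U : H →L[ℂ] H)
    {u : ℝ} (hu : 0 < u) (hU : ‖U‖ ≤ u) : TCs s (A * U) (u * K) := by
  intro e f he hf
  have := h e _ he (hf.map U hu hU)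
  rw [← inv_mul_le_iff₀ hu, Finset.mul_sum]
  refine le_trans (le_of_eq ?_) this
  refine Finset.sum_congr rfl fun i _ => ?_
  rw [map_smul, inner_smul_right, norm_mul,
    Complex.norm_real, Real.norm_of_nonneg (by positivity)]
  rfl

lemma TC.mul_left {A : H →L[ℂ] H} (h : TC ι A) (U : H →L[ℂ] H) : TC ι (U * A) := by
  obtain ⟨K, hK⟩ := h
  exact ⟨(‖U‖ + 1) * K, fun s => (hK s).mul_left U (by positivity) (by linarith)⟩

lemma TC.mul_right {A : H →L[ℂ] H} (h : TC ι A) (U : H →L[ℂ] H) : TC ι (A * U) := by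
  obtain ⟨K, hK⟩ := h
  exact ⟨(‖U‖ + 1) * K, fun s => (hK s).mul_right U (by positivity) (by linarith)⟩

lemma bessel_basis (g : HilbertBasis ι ℂ H) (s : Finset ι) : Bessel s g := fun x =>
  sum_le_hasSum s (fun _ _ => by positivity) (parseval g x)

lemma TC.summable {A : H →L[ℂ] H} (h : TC ι A) (g : HilbertBasis ι ℂ H) :
    Summable (fun i => ⟪g i, A (g i)⟫_ℂ) := by
  obtain ⟨K, hK⟩ := h
  refine Summable.of_norm ?_
  exact summable_of_sum_le (c := K) (fun _ => norm_nonneg _)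
    (fun s => hK s _ _ (bessel_basis g s) (bessel_basis g s))

lemma hs_bound (g : HilbertBasis ι ℂ H) {S : H →L[ℂ] H} (hS : IsSelfAdjoint S)
    (hs : Summable fun j => ‖S (g j)‖ ^ 2) {s : Finset ι} {e : ι → H} (he : Bessel s e) :
    ∑ i ∈ s, ‖S (e i)‖ ^ 2 ≤ ∑' j, ‖S (g j)‖ ^ 2 := by
  have h1 : HasSum (fun j => ∑ i ∈ s, ‖⟪g j, S (e i)⟫_ℂ‖ ^ 2) (∑ i ∈ s, ‖S (e i)‖ ^ 2) :=
    hasSum_sum fun i _ => parseval g (S (e i))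
  refine hasSum_le (fun j => ?_) h1 hs.hasSum
  refine le_trans (le_of_eq ?_) (he (S (g j)))
  refine Finset.sum_congr rfl fun i _ => ?_
  rw [← norm_inner_symm, ← ContinuousLinearMap.adjoint_inner_right,
    ContinuousLinearMap.isSelfAdjoint_iff'.mp hS]

lemma inner_sq {S : H →L[ℂ] H} (hS : IsSelfAdjoint S) (x y : H) :
    ⟪x, (S * S) y⟫_ℂ = ⟪S x, S y⟫_ℂ := by
  rw [← ContinuousLinearMap.adjoint_inner_right, ContinuousLinearMap.isSelfAdjoint_iff'.mp hS]
  rfl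

lemma TC_of_pos (g : HilbertBasis ι ℂ H) {P : H →L[ℂ] H} (hP : 0 ≤ P)
    (hs : Summable fun i => (⟪g i, P (g i)⟫_ℂ).re) : TC ι P := by
  have hS : IsSelfAdjoint (CFC.sqrt P) := IsSelfAdjoint.of_nonneg (CFC.sqrt_nonneg P)
  have hSS : CFC.sqrt P * CFC.sqrt P = P := CFC.sqrt_mul_sqrt_self P hP
  generalize CFC.sqrt P = S at hS hSS
  subst hSS
  have hs' : Summable fun j => ‖S (g j)‖ ^ 2 := by
    refine hs.congr fun j => ?_
    rw [inner_sq hS, inner_self_eq_norm_sq_to_K]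
    norm_cast
  refine ⟨∑' j, ‖S (g j)‖ ^ 2, fun s e f he hf => ?_⟩
  have h1 := hs_bound g hS hs' he
  have h2 := hs_bound g hS hs' hf
  calc ∑ i ∈ s, ‖⟪e i, (S * S) (f i)⟫_ℂ‖ ≤ ∑ i ∈ s, (‖S (e i)‖ ^ 2 + ‖S (f i)‖ ^ 2) / 2 := by
        refine Finset.sum_le_sum fun i _ => ?_
        rw [inner_sq hS]
        refine (norm_inner_le_norm _ _).trans ?_
        nlinarith [sq_nonneg (‖S (e i)‖ - ‖S (f i)‖)]
    _ ≤ _ := by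
        rw [← Finset.sum_div, Finset.sum_add_distrib]
        linarith

lemma norm_sub_le {B : H →L[ℂ] H} {c l : ℝ} (hcl : c ≤ l)
    (hB : c • (1 : H →L[ℂ] H) ≤ B) (hl : B ≤ l • (1 : H →L[ℂ] H)) :
    ‖l • (1 : H →L[ℂ] H) - B‖ ≤ l - c := by
  rw [CStarAlgebra.norm_le_iff_le_algebraMap _ (by linarith) (sub_nonneg.mpr hl),
    Algebra.algebraMap_eq_smul_one, sub_smul]
  exact sub_le_sub_left hB _

lemma TC_sylvester {M B T Q : H →L[ℂ] H} {c : ℝ} (hc : 0 < c) (hM : 0 ≤ M)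
    (hB : c • (1 : H →L[ℂ] H) ≤ B) (hBsa : IsSelfAdjoint B)
    (h : M * T + T * B = Q) (hQ : TC ι Q) : TC ι T := by
  obtain ⟨q, hq⟩ := hQ
  set l : ℝ := ‖M‖ + ‖B‖ + c + 1 with hl
  have hl0 : 0 < l := by positivity
  have hlc : 0 < l - c := by rw [hl]; linarith [norm_nonneg M, norm_nonneg B]
  have hbound : ∀ X : H →L[ℂ] H, IsSelfAdjoint X → ‖X‖ ≤ l → X ≤ l • (1 : H →L[ℂ] H) := by
    intro X hX hXl
    refine (IsSelfAdjoint.le_algebraMap_norm_self hX).trans ?_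
    rw [Algebra.algebraMap_eq_smul_one]
    exact smul_le_smul_of_nonneg_right hXl zero_le_one
  have hMl : ‖l • (1 : H →L[ℂ] H) - M‖ ≤ l := by
    have := norm_sub_le (c := 0) (l := l) hl0.le (by simpa using hM)
      (hbound M (IsSelfAdjoint.of_nonneg hM) (by rw [hl]; linarith [norm_nonneg M, norm_nonneg B]))
    simpa using this
  have hBl : ‖l • (1 : H →L[ℂ] H) - B‖ ≤ l - c :=
    norm_sub_le (by linarith) hB
      (hbound B hBsa (by rw [hl]; linarith [norm_nonneg M, norm_nonneg B]))
  refine ⟨q / c, fun s => ?_⟩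
  let D : Set ℝ := {r | ∃ e f : ι → H, Bessel s e ∧ Bessel s f ∧
    r = ∑ i ∈ s, ‖⟪e i, T (f i)⟫_ℂ‖}
  have hbdd : BddAbove D := by
    refine ⟨∑ i ∈ s, ‖T‖, ?_⟩
    rintro r ⟨e, f, he, hf, rfl⟩
    refine Finset.sum_le_sum fun i hi => ?_
    have h1 := he.norm_le hi
    have h2 := hf.norm_le hi
    calc ‖⟪e i, T (f i)⟫_ℂ‖ ≤ ‖e i‖ * ‖T (f i)‖ := norm_inner_le_norm _ _
      _ ≤ 1 * (‖T‖ * 1) := by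
        gcongr
        exact (T.le_opNorm _).trans (by gcongr)
      _ = ‖T‖ := by ring
  have hne : D.Nonempty := ⟨_, fun _ => 0, fun _ => 0, fun x => by simp, fun x => by simp, rfl⟩
  have hK : TCs s T (sSup D) := fun e f he hf => le_csSup hbdd ⟨e, f, he, hf, rfl⟩
  have hmain : 2 * l * sSup D ≤ q + l * sSup D + (l - c) * sSup D := by
    rw [← le_div_iff₀' (by positivity)]
    refine csSup_le hne ?_
    rintro r ⟨e, f, he, hf, rfl⟩
    rw [le_div_iff₀' (by positivity)]
    have e1 := hq s e f he hf
    have e2 := hK.mul_left _ hl0 hMl e f he hf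
    have e3 := hK.mul_right _ hlc hBl e f he hf
    refine le_trans ?_ (add_le_add (add_le_add e1 e2) e3)
    rw [Finset.mul_sum, ← Finset.sum_add_distrib, ← Finset.sum_add_distrib]
    refine Finset.sum_le_sum fun i _ => ?_
    have hid : (2 * l) • T = Q + (l • (1 : H →L[ℂ] H) - M) * T
        + T * (l • (1 : H →L[ℂ] H) - B) := by
      rw [← h, sub_mul, mul_sub, smul_mul_assoc, mul_smul_comm, one_mul, mul_one, two_mul, add_smul]
      abel
    have : (2 * l) * ‖⟪e i, T (f i)⟫_ℂ‖ = ‖⟪e i, ((2 * l) • T) (f i)⟫_ℂ‖ := by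
      rw [ContinuousLinearMap.smul_apply, inner_smul_right_eq_smul, norm_smul,
        Real.norm_of_nonneg (by positivity)]
    rw [this, hid, ContinuousLinearMap.add_apply, ContinuousLinearMap.add_apply, inner_add_right,
      inner_add_right]
    exact norm_add₃_le
  intro e f he hf
  refine (hK e f he hf).trans ?_
  rw [le_div_iff₀ hc]
  linarith

lemma trace_comm (g : HilbertBasis ι ℂ H) (X Y : H →L[ℂ] H)
    (hX : Summable fun i => ‖(ContinuousLinearMap.adjoint X) (g i)‖ ^ 2)
    (hY : Summable fun i => ‖Y (g i)‖ ^ 2) :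
    ∑' i, ⟪g i, (X * Y) (g i)⟫_ℂ = ∑' i, ⟪g i, (Y * X) (g i)⟫_ℂ := by
  set F : ι → ι → ℂ := fun i j => ⟪(ContinuousLinearMap.adjoint X) (g i), g j⟫_ℂ * ⟪g j, Y (g i)⟫_ℂ
    with hF
  have key : ∀ Z : H →L[ℂ] H, (Summable fun i => ‖Z (g i)‖ ^ 2) →
      Summable fun p : ι × ι => ‖⟪g p.2, Z (g p.1)⟫_ℂ‖ ^ 2 := by
    intro Z hZ
    rw [summable_prod_of_nonneg (fun _ => by positivity)]
    exact ⟨fun i => (parseval g (Z (g i))).summable,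
      hZ.congr fun i => ((parseval g (Z (g i))).tsum_eq).symm⟩
  have hsum : Summable (Function.uncurry F) := by
    refine Summable.of_norm_bounded ((key _ hX).add (key _ hY)) ?_
    rintro ⟨i, j⟩
    simp only [Function.uncurry, hF, norm_mul]
    rw [norm_inner_symm]
    nlinarith [sq_nonneg (‖⟪g j, (ContinuousLinearMap.adjoint X) (g i)⟫_ℂ‖ - ‖⟪g j, Y (g i)⟫_ℂ‖),
      sq_nonneg (‖⟪g j, (ContinuousLinearMap.adjoint X) (g i)⟫_ℂ‖),
      sq_nonneg (‖⟪g j, Y (g i)⟫_ℂ‖)]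
  have hc := hsum.tsum_comm
  have h1 : ∀ i, ∑' j, F i j = ⟪g i, (X * Y) (g i)⟫_ℂ := by
    intro i
    rw [hF, g.tsum_inner_mul_inner, ContinuousLinearMap.adjoint_inner_left]
    rfl
  have h2 : ∀ j, ∑' i, F i j = ⟪g j, (Y * X) (g j)⟫_ℂ := by
    intro j
    have : ∀ i, F i j = ⟪(ContinuousLinearMap.adjoint Y) (g j), g i⟫_ℂ * ⟪g i, X (g j)⟫_ℂ := by
      intro i
      simp only [hF]
      rw [ContinuousLinearMap.adjoint_inner_left, ContinuousLinearMap.adjoint_inner_left, mul_comm]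
    simp_rw [this]
    rw [g.tsum_inner_mul_inner, ContinuousLinearMap.adjoint_inner_left]
    rfl
  simp_rw [h1, h2] at hc
  exact hc.symm

/-- trace is invariant under similarity -/
lemma trace_conj (g : HilbertBasis ι ℂ H) {T b b' : H →L[ℂ] H} (hT0 : 0 ≤ T) (hT : TC ι T)
    (hb : IsSelfAdjoint b) (hb' : IsSelfAdjoint b') (hbb : b' * b = 1) :
    ∑' i, ⟪g i, (b * T * b') (g i)⟫_ℂ = ∑' i, ⟪g i, T (g i)⟫_ℂ := by
  have hS : IsSelfAdjoint (CFC.sqrt T) := IsSelfAdjoint.of_nonneg (CFC.sqrt_nonneg T)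
  have hSS : CFC.sqrt T * CFC.sqrt T = T := CFC.sqrt_mul_sqrt_self T hT0
  generalize CFC.sqrt T = S at hS hSS
  subst hSS
  have hsm : ∀ a : H →L[ℂ] H, IsSelfAdjoint a → Summable fun i => ‖(S * a) (g i)‖ ^ 2 := by
    intro a ha
    have := Complex.hasSum_re (((hT.mul_left a).mul_right a).summable g).hasSum
    refine this.summable.congr fun i => ?_
    have : ⟪g i, (a * (S * S) * a) (g i)⟫_ℂ = ⟪S (a (g i)), S (a (g i))⟫_ℂ := by
      rw [← inner_sq hS, ← ContinuousLinearMap.adjoint_inner_right,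
        ContinuousLinearMap.isSelfAdjoint_iff'.mp ha]
      rfl
    rw [this, inner_self_eq_norm_sq_to_K]
    norm_cast
  have hadj : ContinuousLinearMap.adjoint (b * S) = S * b := by
    rw [← ContinuousLinearMap.star_eq_adjoint, star_mul, hS.star_eq, hb.star_eq]
  have := trace_comm g (b * S) (S * b') (by rw [hadj]; exact hsm b hb) (hsm b' hb')
  rw [show b * (S * S) * b' = b * S * (S * b') by simp only [mul_assoc], this,
    show S * b' * (b * S) = S * (b' * b) * S by simp only [mul_assoc], hbb, mul_one]

lemma alg1 {R : Type*} [Ring R] {b w M B : R} (h1 : b * w = 1) (hbb : b * b = B) :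
    B * (w * M * w - 1) = b * (M - B) * w := by
  have h1' : ∀ x, b * (w * x) = x := fun x => by rw [← mul_assoc, h1, one_mul]
  subst hbb
  simp only [mul_sub, sub_mul, mul_assoc, h1, h1', mul_one]

lemma alg2 {R : Type*} [Ring R] {b w M n B P : R} (h1 : b * w = 1) (h2 : w * b = 1)
    (h3 : M * n = 1) (h4 : n * M = 1) (hbb : b * b = B) (hMM : M * M = b * P * b + B ^ 2) :
    B * (w * M * w - 1) ^ 2 * (b * n * b)
      = b * (M - B) * w + w * ((M - B) * b) - P * (b * n * b) := by
  have h1' : ∀ x, b * (w * x) = x := fun x => by rw [← mul_assoc, h1, one_mul]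
  have h2' : ∀ x, w * (b * x) = x := fun x => by rw [← mul_assoc, h2, one_mul]
  have h3' : ∀ x, M * (n * x) = x := fun x => by rw [← mul_assoc, h3, one_mul]
  have hP : P = w * (M * M - B ^ 2) * w := by
    rw [hMM, add_sub_cancel_right]
    simp only [mul_assoc, h1, h2', mul_one]
  rw [hP]
  subst hbb
  simp only [pow_two, mul_sub, sub_mul, mul_assoc, h1, h1', h2, h2', h3, h3', mul_one, one_mul]
  abel

end ZS

/-- For `B ≥ c·1` self-adjoint (`c > 0`) and `P` positive trace class,
`Tr[B z_*²(1+z_*)⁻¹] + Tr[P(1+z_*)⁻¹] = 2 Tr[B z_*] = 2 Tr[(B^{1/2} P B^{1/2} + B²)^{1/2} − B]`. -/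
theorem zStar_energy_value {H : Type*} [NormedAddCommGroup H] [InnerProductSpace ℂ H]
    [CompleteSpace H] (B P : H →L[ℂ] H) (c : ℝ) (hc : 0 < c) (hBsa : IsSelfAdjoint B)
    (hB : c • (1 : H →L[ℂ] H) ≤ B) (hP : IsPosTraceClass P) :
    opTrace (B * zStar B P ^ 2 * Ring.inverse (1 + zStar B P))
        + opTrace (P * Ring.inverse (1 + zStar B P))
      = 2 * opTrace (B * zStar B P) ∧
    2 * opTrace (B * zStar B P)
      = 2 * opTrace (CFC.sqrt (CFC.sqrt B * P * CFC.sqrt B + B ^ 2) - B) := by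
  have hunitB : IsUnit B := CStarAlgebra.isUnit_of_le (c • (1 : H →L[ℂ] H)) hB
    (IsStrictlyPositive.smul hc isStrictlyPositive_one)
  have hB0 : 0 ≤ B := le_trans (smul_nonneg hc.le zero_le_one) hB
  have hPB : IsUnit (P + B) := CStarAlgebra.isUnit_of_le (c • (1 : H →L[ℂ] H))
    (hB.trans (le_add_of_nonneg_left hP.1))
    (IsStrictlyPositive.smul hc isStrictlyPositive_one)
  have hb0 : 0 ≤ CFC.sqrt B := CFC.sqrt_nonneg B
  have hbb : CFC.sqrt B * CFC.sqrt B = B := CFC.sqrt_mul_sqrt_self B hB0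
  unfold zStar
  have hbu : IsUnit (CFC.sqrt B) := by
    rw [← hbb] at hunitB
    exact ((Commute.refl _).isUnit_mul_iff.mp hunitB).1
  generalize CFC.sqrt B = b at hb0 hbb hbu
  have hbs : IsSelfAdjoint b := IsSelfAdjoint.of_nonneg hb0
  have hbPb : 0 ≤ b * P * b := hbs.conjugate_nonneg hP.1
  have hR : b * (P + B) * b = b * P * b + B ^ 2 := by
    rw [← hbb]; noncomm_ring
  have hBB : 0 ≤ B ^ 2 := by
    rw [sq]; simpa using hBsa.conjugate_nonneg (zero_le_one (α := H →L[ℂ] H))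
  have hR0 : 0 ≤ b * P * b + B ^ 2 := add_nonneg hbPb hBB
  have hMu : IsUnit (CFC.sqrt (b * P * b + B ^ 2)) := by
    have h1 : IsUnit (b * (P + B) * b) := (hbu.mul hPB).mul hbu
    rw [hR, ← CFC.sqrt_mul_sqrt_self _ hR0] at h1
    exact ((Commute.refl _).isUnit_mul_iff.mp h1).1
  have hMM := CFC.sqrt_mul_sqrt_self _ hR0
  have hM0 := CFC.sqrt_nonneg (b * P * b + B ^ 2)
  have hMB : B ≤ CFC.sqrt (b * P * b + B ^ 2) := by
    have := CFC.sqrt_le_sqrt (B ^ 2) (b * P * b + B ^ 2) (le_add_of_nonneg_left hbPb)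
    rwa [sq, CFC.sqrt_mul_self B hB0, ← sq] at this
  rw [hR]
  generalize CFC.sqrt (b * P * b + B ^ 2) = M at hMu hMM hM0 hMB
  obtain ⟨v, rfl⟩ := hbu
  obtain ⟨m, rfl⟩ := hMu
  rw [Ring.inverse_unit]
  set b : H →L[ℂ] H := (v : H →L[ℂ] H) with hbdef
  set M : H →L[ℂ] H := (m : H →L[ℂ] H) with hMdef
  have hX : 1 + ((↑v⁻¹ : H →L[ℂ] H) * M * (↑v⁻¹ : H →L[ℂ] H) - 1)
      = ((v⁻¹ * m * v⁻¹ : (H →L[ℂ] H)ˣ) : H →L[ℂ] H) := by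
    simp [hMdef]
  rw [hX, Ring.inverse_unit]
  have hXi : ((v⁻¹ * m * v⁻¹ : (H →L[ℂ] H)ˣ)⁻¹ : (H →L[ℂ] H)ˣ) = v * m⁻¹ * v := by group
  have h1 : b * (↑v⁻¹ : H →L[ℂ] H) = 1 := v.mul_inv
  have h2 : (↑v⁻¹ : H →L[ℂ] H) * b = 1 := v.inv_mul
  have h3 : M * (↑m⁻¹ : H →L[ℂ] H) = 1 := m.mul_inv
  have h4 : (↑m⁻¹ : H →L[ℂ] H) * M = 1 := m.inv_mul
  rw [hXi, Units.val_mul, Units.val_mul, ← hbdef]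
  have hws : IsSelfAdjoint (↑v⁻¹ : H →L[ℂ] H) := by
    have : (↑v⁻¹ : H →L[ℂ] H) = Ring.inverse b := (Ring.inverse_unit v).symm
    rw [this]
    exact hbs.ringInverse
  generalize (↑v⁻¹ : H →L[ℂ] H) = w at h1 h2 hws
  generalize (↑m⁻¹ : H →L[ℂ] H) = n at h3 h4
  clear_value b M
  -- trace class facts
  have tP : ZS.TC _ P := ZS.TC_of_pos (traceBasis H) hP.1 hP.2
  have tT : ZS.TC (exists_hilbertBasis ℂ H).choose (M - B) := by
    refine ZS.TC_sylvester hc hM0 hB hBsa (Q := b * P * b) ?_ ((tP.mul_left b).mul_right b)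
    rw [mul_sub, sub_mul, hMM]; noncomm_ring
  have hBz : B * (w * M * w - 1) = b * (M - B) * w := by
    exact ZS.alg1 h1 hbb
  have hsum : ∀ A : H →L[ℂ] H, ZS.TC (exists_hilbertBasis ℂ H).choose A → Summable (opDiag A) :=
    fun A hA => (Complex.hasSum_re (hA.summable (traceBasis H)).hasSum).summable
  have htr : ∀ A : H →L[ℂ] H, ZS.TC (exists_hilbertBasis ℂ H).choose A →
      opTrace A = (∑' i, ⟪traceBasis H i, A (traceBasis H i)⟫_ℂ).re :=
    fun A hA => (Complex.hasSum_re (hA.summable (traceBasis H)).hasSum).tsum_eq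
  have tBz : ZS.TC (exists_hilbertBasis ℂ H).choose (b * (M - B) * w) :=
    (tT.mul_left b).mul_right w
  have tPX : ZS.TC (exists_hilbertBasis ℂ H).choose (P * (b * n * b)) := tP.mul_right _
  constructor
  · have hdiag : ∀ i, opDiag (B * (w * M * w - 1) ^ 2 * (b * n * b)) i
        = 2 * opDiag (b * (M - B) * w) i - opDiag (P * (b * n * b)) i := by
      intro i
      have hop : B * (w * M * w - 1) ^ 2 * (b * n * b)
          = b * (M - B) * w + star (b * (M - B) * w) - P * (b * n * b) := by
        rw [star_mul, star_mul, hws.star_eq, hbs.star_eq, star_sub, hBsa.star_eq,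
          (IsSelfAdjoint.of_nonneg hM0).star_eq]
        exact ZS.alg2 h1 h2 h3 h4 hbb hMM
      have hstar : opDiag (star (b * (M - B) * w)) i = opDiag (b * (M - B) * w) i := by
        unfold opDiag
        rw [ContinuousLinearMap.star_eq_adjoint, ContinuousLinearMap.adjoint_inner_right,
          ← inner_conj_symm, Complex.conj_re]
      have hadd : opDiag (b * (M - B) * w + star (b * (M - B) * w) - P * (b * n * b)) i
          = opDiag (b * (M - B) * w) i + opDiag (star (b * (M - B) * w)) i
            - opDiag (P * (b * n * b)) i := by
        simp only [opDiag, ContinuousLinearMap.sub_apply, ContinuousLinearMap.add_apply,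
          inner_sub_right, inner_add_right, Complex.sub_re, Complex.add_re]
      rw [hop, hadd, hstar]; ring
    rw [hBz]
    unfold opTrace
    rw [tsum_congr hdiag, ((hsum _ tBz).mul_left 2).tsum_sub (hsum _ tPX), tsum_mul_left]
    ring
  · rw [hBz, htr _ tBz, htr _ tT,
      ZS.trace_conj (traceBasis H) (sub_nonneg.mpr hMB) tT hbs hws h2]
end

section
/- For all real numbers a, b > 0 and c > 0, the function F : [0,∞) × [0,∞) → ℝ defined by F(t,s) = a·t²/(1+t) + b·s²/(1+s) − c·t·s·(1/(1+t) + 1/(1+s)) is not convex on the convex set [0,∞) × [0,∞). -/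
set_option synthInstance.maxHeartbeats 1000000
set_option maxHeartbeats 1000000

open scoped InnerProductSpace

/-- For all `a, b, c > 0`, the function
`F(t,s) = a t²/(1+t) + b s²/(1+s) − c t s (1/(1+t) + 1/(1+s))` is not convex on
`[0,∞) × [0,∞)`. -/
theorem rank_two_restriction_not_convex (a b c : ℝ) (ha : 0 < a) (hb : 0 < b) (hc : 0 < c) :
    ¬ ConvexOn ℝ (Set.Ici (0 : ℝ) ×ˢ Set.Ici (0 : ℝ))
      (fun p : ℝ × ℝ =>
        a * p.1 ^ 2 / (1 + p.1) + b * p.2 ^ 2 / (1 + p.2)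
          - c * p.1 * p.2 * (1 / (1 + p.1) + 1 / (1 + p.2))) := by
  intro h
  obtain ⟨R, hR1, hR⟩ : ∃ R : ℝ, 1 ≤ R ∧ c * R = c + 2 * (a + b) :=
    ⟨1 + 2 * (a + b) / c, by
      have : 0 ≤ 2 * (a + b) / c := by positivity
      linarith, by field_simp⟩
  have hR0 : 0 < R := by linarith
  have h1 : ((R - 1, R - 1) : ℝ × ℝ) ∈ Set.Ici (0 : ℝ) ×ˢ Set.Ici (0 : ℝ) := by
    constructor <;> simp <;> linarith
  have h2 : ((3 * R - 1, 9 * R - 1) : ℝ × ℝ) ∈ Set.Ici (0 : ℝ) ×ˢ Set.Ici (0 : ℝ) := by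
    constructor <;> simp <;> linarith
  have key := h.2 h1 h2 (show (0 : ℝ) ≤ 1 / 2 by norm_num) (show (0 : ℝ) ≤ 1 / 2 by norm_num)
    (by norm_num)
  simp only [Prod.smul_mk, Prod.mk_add_mk, smul_eq_mul] at key
  have e1 : (1 / 2 * (R - 1) + 1 / 2 * (3 * R - 1) : ℝ) = 2 * R - 1 := by ring
  have e2 : (1 / 2 * (R - 1) + 1 / 2 * (9 * R - 1) : ℝ) = 5 * R - 1 := by ring
  rw [e1, e2] at key
  simp only [add_sub_cancel] at key
  have d : (1 / 2 * (a * (R - 1) ^ 2 / R + b * (R - 1) ^ 2 / R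
        - c * (R - 1) * (R - 1) * (1 / R + 1 / R))
      + 1 / 2 * (a * (3 * R - 1) ^ 2 / (3 * R) + b * (9 * R - 1) ^ 2 / (9 * R)
        - c * (3 * R - 1) * (9 * R - 1) * (1 / (3 * R) + 1 / (9 * R))))
      - (a * (2 * R - 1) ^ 2 / (2 * R) + b * (5 * R - 1) ^ 2 / (5 * R)
        - c * (2 * R - 1) * (5 * R - 1) * (1 / (2 * R) + 1 / (5 * R)))
      = ((a - c) / 6 + 16 * (b - c) / 45 - 7 / 30 * (c * R)) / R := by
    field_simp
    ring
  have neg : ((a - c) / 6 + 16 * (b - c) / 45 - 7 / 30 * (c * R)) / R < 0 := by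
    apply div_neg_of_neg_of_pos _ hR0
    rw [hR]
    linarith
  linarith
end

section
/- Let A be a positive bounded operator on a complex Hilbert space H. Then for every ψ ∈ H, the function λ ↦ λ^{-1/2} A(A + λ·1)^{-1} ψ is Bochner integrable on (0,∞) and A^{1/2} ψ = (1/π) ∫₀^∞ λ^{-1/2} A (A + λ·1)^{-1} ψ dλ. -/
set_option synthInstance.maxHeartbeats 1000000
set_option maxHeartbeats 1000000

open scoped InnerProductSpace

open MeasureTheory

lemma aux_scalar : ∫ t in Set.Ioi (0:ℝ), Real.rpowIntegrand₀₁ (1/2) t 1 = Real.pi := by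
  have hp : (1/2:ℝ) ∈ Set.Ioo (0:ℝ) 1 := by norm_num
  have h := integral_Ioi_of_hasDerivAt_of_tendsto (f := fun t => 2 * Real.arctan (Real.sqrt t))
    (f' := fun t => Real.rpowIntegrand₀₁ (1/2) t 1) (a := 0) (m := Real.pi)
    (by fun_prop) ?_ (Real.integrableOn_rpowIntegrand₀₁_Ioi hp zero_le_one) ?_
  · rw [h]; simp
  · intro t ht
    have ht : 0 < t := ht
    have h1 := ((Real.hasDerivAt_sqrt ht.ne').arctan).const_mul 2
    refine h1.congr_deriv ?_
    rw [Real.rpowIntegrand₀₁_eq_pow_div hp ht.le zero_le_one, Real.sq_sqrt ht.le,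
      show (1/2 - 1 : ℝ) = -(1/2) by norm_num, Real.rpow_neg ht.le, ← Real.sqrt_eq_rpow]
    have := Real.sqrt_pos.2 ht
    field_simp
    ring
  · have h1 := (Real.tendsto_arctan_atTop.mono_right nhdsWithin_le_nhds).comp
      Real.tendsto_sqrt_atTop
    have h2 := h1.const_mul 2
    rw [show 2 * (Real.pi / 2) = Real.pi by ring] at h2
    exact h2

lemma aux_cfc {H : Type*} [NormedAddCommGroup H]
    [InnerProductSpace ℂ H] [CompleteSpace H] (A : H →L[ℂ] H) (hA : 0 ≤ A) (t : ℝ) (ht : 0 < t) :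
    cfc (Real.rpowIntegrand₀₁ (1/2) t) A =
      t ^ (-(1 / 2) : ℝ) • (A * Ring.inverse (A + t • 1)) := by
  have hp : (1/2:ℝ) ∈ Set.Ioo (0:ℝ) 1 := by norm_num
  have hsa : IsSelfAdjoint A := .of_nonneg hA
  have hspec : ∀ x ∈ spectrum ℝ A, 0 ≤ x := fun x hx => spectrum_nonneg_of_nonneg hA hx
  have hB : A + t • 1 = cfc (fun x : ℝ => x + t) A := by
    rw [cfc_add_const t (fun x : ℝ => x) A, cfc_id' ℝ A, Algebra.algebraMap_eq_smul_one]
  have hc1 : ContinuousOn (fun x : ℝ => (x + t)⁻¹) (spectrum ℝ A) := by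
    refine ContinuousOn.inv₀ (by fun_prop) ?_
    intro x hx; have := hspec x hx; positivity
  have hu : IsUnit (cfc (fun x : ℝ => x + t) A) := by
    rw [isUnit_cfc_iff (fun x : ℝ => x + t) A]
    intro x hx; have := hspec x hx; positivity
  have hinv : Ring.inverse (A + t • 1) = cfc (fun x : ℝ => (x + t)⁻¹) A := by
    rw [hB]
    have h1 : cfc (fun x : ℝ => (x + t)⁻¹) A * cfc (fun x : ℝ => x + t) A = 1 := by
      rw [← cfc_mul (fun x : ℝ => (x + t)⁻¹) (fun x : ℝ => x + t) A hc1 (by fun_prop),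
        ← cfc_const_one ℝ A]
      refine cfc_congr ?_
      intro x hx
      have := hspec x hx
      exact inv_mul_cancel₀ (by positivity)
    calc _ = (cfc (fun x : ℝ => (x + t)⁻¹) A * cfc (fun x : ℝ => x + t) A) *
          Ring.inverse (cfc (fun x : ℝ => x + t) A) := by rw [h1, one_mul]
      _ = _ := by rw [mul_assoc, Ring.mul_inverse_cancel _ hu, mul_one]
  rw [hinv]
  nth_rw 2 [← cfc_id' ℝ A]
  rw [← cfc_mul (fun x : ℝ => x) _ A (by fun_prop) hc1, ← cfc_smul _ _ A (by fun_prop)]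
  refine cfc_congr ?_
  intro x hx
  have := hspec x hx
  simp only
  rw [Real.rpowIntegrand₀₁_eq_pow_div hp ht.le this, show (1/2 - 1 : ℝ) = -(1/2) by norm_num,
    smul_eq_mul, add_comm x t]
  ring

/-- For a positive bounded operator `A` and `ψ ∈ H`, the function
`λ ↦ λ^{-1/2} A(A + λ)⁻¹ ψ` is Bochner integrable on `(0,∞)` and
`A^{1/2} ψ = (1/π) ∫₀^∞ λ^{-1/2} A (A + λ)⁻¹ ψ dλ`. -/
theorem sqrt_integral_representation {H : Type*} [NormedAddCommGroup H]
    [InnerProductSpace ℂ H] [CompleteSpace H] (A : H →L[ℂ] H) (hA : 0 ≤ A) (ψ : H) :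
    IntegrableOn
      (fun lam : ℝ => lam ^ (-(1 / 2) : ℝ) • (A * Ring.inverse (A + lam • 1)) ψ)
      (Set.Ioi (0 : ℝ)) ∧
    CFC.sqrt A ψ = (1 / Real.pi)
      • ∫ lam in Set.Ioi (0 : ℝ),
          lam ^ (-(1 / 2) : ℝ) • (A * Ring.inverse (A + lam • 1)) ψ := by
  have hp : (1/2:ℝ) ∈ Set.Ioo (0:ℝ) 1 := by norm_num
  have hsa : IsSelfAdjoint A := .of_nonneg hA
  have hspec : ∀ x ∈ spectrum ℝ A, 0 ≤ x := fun x hx => spectrum_nonneg_of_nonneg hA hx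
  have hcont : ContinuousOn (Function.uncurry (Real.rpowIntegrand₀₁ (1/2)))
      (Set.Ioi 0 ×ˢ spectrum ℝ A) :=
    Real.continuousOn_rpowIntegrand₀₁_uncurry hp _ hspec
  have hM : ∀ x ∈ spectrum ℝ A, x ≤ ‖A‖ * ‖(1 : H →L[ℂ] H)‖ := fun x hx =>
    (le_abs_self x).trans (spectrum.norm_le_norm_mul_of_mem hx)
  have hM0 : 0 ≤ ‖A‖ * ‖(1 : H →L[ℂ] H)‖ := by positivity
  have hbound : ∀ᵐ t ∂(volume.restrict (Set.Ioi (0:ℝ))), ∀ z ∈ spectrum ℝ A,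
      ‖Real.rpowIntegrand₀₁ (1/2) t z‖ ≤
        Real.rpowIntegrand₀₁ (1/2) t (‖A‖ * ‖(1 : H →L[ℂ] H)‖) := by
    refine ae_restrict_of_forall_mem measurableSet_Ioi fun t ht z hz => ?_
    have ht : 0 < t := ht
    rw [Real.norm_of_nonneg (Real.rpowIntegrand₀₁_nonneg hp.1 ht.le (hspec z hz))]
    exact Real.rpowIntegrand₀₁_monotoneOn hp ht.le (hspec z hz) hM0 (hM z hz)
  have hfin := (Real.integrableOn_rpowIntegrand₀₁_Ioi hp hM0).hasFiniteIntegral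
  have hint := integrableOn_cfc measurableSet_Ioi _ _ A hcont hbound hfin
  have heq := cfc_setIntegral measurableSet_Ioi _ _ A hcont hbound hfin
  have hcongr : Set.EqOn (fun t => (cfc (Real.rpowIntegrand₀₁ (1/2) t) A) ψ)
      (fun lam : ℝ => lam ^ (-(1 / 2) : ℝ) • (A * Ring.inverse (A + lam • 1)) ψ)
      (Set.Ioi (0 : ℝ)) := by
    intro t ht
    simp only
    rw [aux_cfc A hA t ht]
    rfl
  refine ⟨?_, ?_⟩
  · refine IntegrableOn.congr_fun ?_ hcongr measurableSet_Ioi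
    exact hint.apply_continuousLinearMap ψ
  · rw [← setIntegral_congr_fun measurableSet_Ioi hcongr,
      ← ContinuousLinearMap.integral_apply hint, ← heq]
    have h1 : cfc (fun r => ∫ t in Set.Ioi (0:ℝ), Real.rpowIntegrand₀₁ (1/2) t r) A
        = Real.pi • CFC.sqrt A := by
      rw [CFC.sqrt_eq_real_sqrt A hA, cfcₙ_eq_cfc, ← cfc_smul _ _ A (by fun_prop)]
      refine cfc_congr ?_
      intro x hx
      simp only
      rw [Real.integral_rpowIntegrand₀₁_eq_rpow_mul_const hp (hspec x hx), aux_scalar,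
        Real.sqrt_eq_rpow, smul_eq_mul, mul_comm]
    rw [h1, ContinuousLinearMap.smul_apply, smul_smul, one_div,
      inv_mul_cancel₀ Real.pi_ne_zero, one_smul]
end
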